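/- arXiv:1609.04195 — 2 statements merged into one kernel-verified Lean document; each statement's English description precedes it below -/
import Mathlib

section
/- Let 0 ≤ δ ≤ 1/4 and let A be an n×n complex Hermitian matrix with 0 ⪯ A ⪯ I whose diagonal entries all satisfy A_{ii} ≤ δ. Then there exists a partition X₁ ⊔ X₂ = {1,…,n} into two disjoint sets such that for i = 1, 2 the largest eigenvalue of P_{X_i} A P_{X_i} is at most (1/4)·(√(3(1−δ)) + √δ)², where P_X denotes the diagonal 0-1 projection matrix onto the coordinates in X. -/
open Polynomial Matrix
open scoped ComplexOrder

/-- The diagonal 0-1 projection matrix onto the coordinates in `X`. -/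
def proj {n : ℕ} (X : Finset (Fin n)) : Matrix (Fin n) (Fin n) ℂ :=
  Matrix.diagonal fun i => if i ∈ X then 1 else 0

/-!
Delete from `A ⊕ A` one of the two copies of each coordinate, in a way described by a function `χ`;
what is left is the pair of compressions of `A` to the blocks of a partition, so it suffices to
find a `χ` for which the largest root of the characteristic polynomial is small. That polynomial is
a mixed derivative of `p z = det (diag z - A ⊕ A)`, which is real stable and affine in each
variable, and it has one factor `∂ (i, false)` or `∂ (i, true)` for each `i`. The choices are made
one coordinate at a time: if `f + g` is positive above `x`, where `f` and `g` are the derivatives of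
a real stable polynomial with respect to two variables, then so is `f` or `g`, by interlacing.

So only `∏ i, (∂ (i, false) + ∂ (i, true)) p` has to be shown positive above `b - κ / 4`. This is a
barrier argument: a bound `κ * ∂ p ≤ p` above `b` for the logarithmic derivatives of `p` survives
the application of one factor if the two variables concerned are moved down by `κ / 4`. Both
steps rest on the Rayleigh inequality `p * ∂ i (∂ j p) ≤ ∂ i p * ∂ j p` at real points. The initial
bound holds because `b - A - κ E` is positive semidefinite for each coordinate projection `E`, which
follows from `0 ≤ A ≤ 1` and `A i i ≤ δ` by completing squares, and `b`, `κ` are then optimized.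
-/

namespace TwoPaving

open ComplexConjugate
open scoped Kronecker

/-- The partial derivative of a multi-affine function. For such functions it is the forward
difference with step `1`, which makes sense over any ring. -/
def partialDeriv {ι K : Type*} [DecidableEq ι] [Ring K] (i : ι) (F : (ι → K) → K) : (ι → K) → K :=
  fwdDiff (Pi.single i 1) F

local notation "∂" => partialDeriv

section MultiAffine

variable {ι K : Type*} [DecidableEq ι]

/-- Functions that are affine in each variable separately, i.e. the polynomial functions of degree
at most one in each variable. -/
def IsMultiAffine [Ring K] (F : (ι → K) → K) : Prop :=
  ∀ i z t, F (z + Pi.single i t) = F z + t * ∂ i F z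

section Ring

variable [Ring K] {F G : (ι → K) → K}

lemma partialDeriv_comm (i j : ι) (F : (ι → K) → K) : ∂ i (∂ j F) = ∂ j (∂ i F) := by
  funext z
  simp only [partialDeriv, fwdDiff, add_right_comm z]
  abel

lemma partialDeriv_add (i : ι) (F G : (ι → K) → K) : ∂ i (F + G) = ∂ i F + ∂ i G :=
  fwdDiff_add _ F G

namespace IsMultiAffine

lemma add (hF : IsMultiAffine F) (hG : IsMultiAffine G) : IsMultiAffine (F + G) := by
  intro i z t
  simp only [partialDeriv_add, Pi.add_apply, hF i z t, hG i z t, mul_add]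
  abel

lemma partialDeriv_add_single_same (hF : IsMultiAffine F) (i : ι) (z : ι → K) (t : K) :
    ∂ i F (z + Pi.single i t) = ∂ i F z := by
  change F (z + Pi.single i t + Pi.single i 1) - F (z + Pi.single i t) = _
  rw [add_assoc, ← Pi.single_add, hF, hF, add_mul, one_mul]
  abel

lemma partialDeriv_self (hF : IsMultiAffine F) (i : ι) : ∂ i (∂ i F) = 0 :=
  funext fun z => sub_eq_zero.2 (hF.partialDeriv_add_single_same i z 1)

end IsMultiAffine

end Ring

namespace IsMultiAffine

lemma partialDeriv [CommRing K] {F : (ι → K) → K} (hF : IsMultiAffine F) (j : ι) :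
    IsMultiAffine (∂ j F) := by
  intro i z t
  change F (z + Pi.single i t + Pi.single j 1) - F (z + Pi.single i t) = (F _ - F z) + t * _
  rw [partialDeriv_comm, add_right_comm, hF i (z + Pi.single j 1), hF i z]
  change _ = _ + t * (∂ i F _ - ∂ i F z)
  ring

lemma continuous [Finite ι] [CommRing K] [TopologicalSpace K] [IsTopologicalRing K]
    {F : (ι → K) → K} (hF : IsMultiAffine F) : Continuous F := by
  have := Fintype.ofFinite ι
  have partial_sum : ∀ s : Finset ι, ∀ {G : (ι → K) → K}, IsMultiAffine G →
      Continuous fun z : ι → K => G (∑ i ∈ s, Pi.single i (z i)) := by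
    intro s
    induction s using Finset.induction_on with
    | empty => exact fun _ => by simpa only [Finset.sum_empty] using continuous_const
    | insert a s ha ih =>
      intro G hG
      simp only [Finset.sum_insert ha, add_comm (Pi.single a _), hG a]
      exact (ih hG).add ((continuous_apply a).mul (ih (hG.partialDeriv a)))
  simpa only [Finset.univ_sum_single] using partial_sum Finset.univ hF

lemma eq_zero_of_forall_mem [Finite ι] [CommRing K] [IsDomain K] {F : (ι → K) → K}
    (hF : IsMultiAffine F) {T : ι → Set K} (hT : ∀ i, (T i).Nontrivial)
    (hzero : ∀ z, (∀ i, z i ∈ T i) → F z = 0) : F = 0 := by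
  have := Fintype.ofFinite ι
  have free_on : ∀ s : Finset ι, ∀ z, (∀ i ∉ s, z i ∈ T i) → F z = 0 := by
    intro s
    induction s using Finset.induction_on with
    | empty => exact fun z hz => hzero z fun i => hz i (Finset.notMem_empty i)
    | insert a s ha ih =>
      intro z hz
      have root : ∀ r ∈ T a, F z + (r - z a) * ∂ a F z = 0 := by
        intro r hr
        rw [← hF]
        refine ih _ fun i hi => ?_
        by_cases hia : i = a
        · subst hia; simpa using hr
        · simpa [hia] using hz i (by simp [hi, hia])
      obtain ⟨r, hr, r', hr', hne⟩ := hT a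
      have slope : (r - r') * ∂ a F z = 0 := by linear_combination root r hr - root r' hr'
      have := root r hr
      rwa [(mul_eq_zero.1 slope).resolve_left (sub_ne_zero.2 hne), mul_zero, add_zero] at this
  exact funext fun z => free_on Finset.univ z fun i hi => absurd (Finset.mem_univ i) hi

lemma add_partialDeriv_apply [CommRing K] {F : (ι → K) → K} (hF : IsMultiAffine F) (a b : ι)
    (z : ι → K) (s : K) :
    (∂ a F + ∂ b F) z = (∂ a F + ∂ b F) (z + Pi.single a s + Pi.single b s)
      - 2 * s * ∂ a (∂ b F) (z + Pi.single a s + Pi.single b s) := by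
  have at_a : ∂ a F (z + Pi.single a s + Pi.single b s) = ∂ a F z + s * ∂ a (∂ b F) z := by
    rw [add_right_comm, hF.partialDeriv_add_single_same, hF.partialDeriv a, partialDeriv_comm]
  have at_b : ∂ b F (z + Pi.single a s + Pi.single b s) = ∂ b F z + s * ∂ a (∂ b F) z := by
    rw [hF.partialDeriv_add_single_same, hF.partialDeriv b]
  have at_ab : ∂ a (∂ b F) (z + Pi.single a s + Pi.single b s) = ∂ a (∂ b F) z := by
    rw [partialDeriv_comm, (hF.partialDeriv a).partialDeriv_add_single_same, partialDeriv_comm,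
      (hF.partialDeriv b).partialDeriv_add_single_same]
  rw [Pi.add_apply, Pi.add_apply, at_a, at_b, at_ab]
  ring

end IsMultiAffine

lemma partialDeriv_star [CommRing K] [StarRing K] {F : (ι → K) → K}
    (hF : ∀ z, F (star z) = star (F z)) (i : ι) (z : ι → K) :
    ∂ i F (star z) = star (∂ i F z) := by
  have hstar : star z + Pi.single i 1 = star (z + Pi.single i 1) := by
    rw [star_add, ← Pi.single_star, star_one]
  simp only [partialDeriv, fwdDiff, hstar, hF, star_sub]

end MultiAffine

section PosAbove

variable {ι : Type*} [DecidableEq ι]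

/-- Positivity on the closed orthant with vertex `x`: in the language of barrier arguments, `x` lies
above the roots of `f`. -/
def PosAbove (f : (ι → ℝ) → ℝ) (x : ι → ℝ) : Prop :=
  ∀ y, x ≤ y → 0 < f y

lemma le_add_single {x y : ι → ℝ} (hxy : x ≤ y) (i : ι) {t : ℝ} (ht : 0 ≤ t) :
    x ≤ y + Pi.single i t :=
  le_add_of_le_of_nonneg hxy (Pi.single_nonneg.2 ht)

lemma orthant_induction [Finite ι] {Q : (ι → ℝ) → Prop} {x : ι → ℝ} (base : Q x)
    (step : ∀ y, x ≤ y → Q y → ∀ i t, 0 ≤ t → Q (y + Pi.single i t)) :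
    ∀ y, x ≤ y → Q y := by
  have := Fintype.ofFinite ι
  intro y hxy
  have hnonneg : ∀ i, 0 ≤ y i - x i := fun i => sub_nonneg.2 (hxy i)
  have partial_sum : ∀ s : Finset ι, Q (x + ∑ i ∈ s, Pi.single i (y i - x i)) := by
    intro s
    induction s using Finset.induction_on with
    | empty => simpa using base
    | insert a s ha ih =>
      rw [Finset.sum_insert ha, add_left_comm, add_comm]
      refine step _ (le_add_of_nonneg_right ?_) ih a _ (hnonneg a)
      exact Finset.sum_nonneg fun i _ => Pi.single_nonneg.2 (hnonneg i)
  have := partial_sum Finset.univ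
  rwa [Finset.univ_sum_single fun i => y i - x i,
    show (fun i => y i - x i) = y - x from rfl, add_sub_cancel] at this

lemma IsMultiAffine.partialDeriv_nonneg {f : (ι → ℝ) → ℝ} (hf : IsMultiAffine f) {x : ι → ℝ}
    (hnonneg : ∀ y, x ≤ y → 0 ≤ f y) (i : ι) {y : ι → ℝ} (hxy : x ≤ y) : 0 ≤ ∂ i f y := by
  by_contra! hneg
  have hfy := hnonneg y hxy
  set t := (f y + 1) / -∂ i f y with ht
  have ht_nonneg : 0 ≤ t := div_nonneg (by linarith) (by linarith)
  have drop : t * ∂ i f y = -(f y + 1) := by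
    rw [ht, div_mul_eq_mul_div, div_neg, mul_div_assoc, div_self hneg.ne, mul_one]
  have := hnonneg _ (le_add_single hxy i ht_nonneg)
  rw [hf, drop] at this
  linarith

end PosAbove

section RealStable

variable {ι : Type*} [DecidableEq ι] {F : (ι → ℂ) → ℂ}

/-- Multi-affine real stable polynomials, encoded as functions on `ℂ^ι`: the coefficients are real,
and there is no zero with all coordinates in the open upper half-plane. The zero polynomial is
excluded. -/
structure IsRealStable (F : (ι → ℂ) → ℂ) : Prop where
  multiAffine : IsMultiAffine F
  map_star : ∀ z, F (star z) = star (F z)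
  ne_zero : ∀ z, (∀ i, 0 < (z i).im) → F z ≠ 0

/-- The restriction to `ℝ^ι` of a polynomial function with real coefficients. -/
noncomputable def realRestrict (F : (ι → ℂ) → ℂ) (x : ι → ℝ) : ℝ :=
  (F fun i => (x i : ℂ)).re

omit [DecidableEq ι] in
lemma realRestrict_add (F G : (ι → ℂ) → ℂ) :
    realRestrict (F + G) = realRestrict F + realRestrict G :=
  rfl

lemma ofReal_add_single (x : ι → ℝ) (i : ι) (t : ℝ) :
    (fun k => ((x + Pi.single i t : ι → ℝ) k : ℂ))
      = (fun k => (x k : ℂ)) + Pi.single i (t : ℂ) := by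
  funext k
  by_cases hk : k = i
  · subst hk; simp
  · simp [hk]

lemma realRestrict_partialDeriv (i : ι) (F : (ι → ℂ) → ℂ) :
    realRestrict (∂ i F) = ∂ i (realRestrict F) := by
  funext x
  simp only [realRestrict, partialDeriv, fwdDiff, ofReal_add_single, Complex.ofReal_one,
    Complex.sub_re]

lemma IsMultiAffine.realRestrict (hF : IsMultiAffine F) : IsMultiAffine (realRestrict F) := by
  intro i x t
  rw [← realRestrict_partialDeriv]
  simp only [TwoPaving.realRestrict]
  rw [ofReal_add_single, hF, Complex.add_re, Complex.re_ofReal_mul]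

omit [DecidableEq ι] in
lemma ofReal_realRestrict (hF : ∀ z, F (star z) = star (F z)) (x : ι → ℝ) :
    (realRestrict F x : ℂ) = F fun i => (x i : ℂ) := by
  have hstar : star (fun i => (x i : ℂ)) = fun i => (x i : ℂ) :=
    funext fun i => Complex.conj_ofReal (x i)
  exact Complex.conj_eq_iff_re.1 (by rw [starRingEnd_apply, ← hF, hstar])

namespace IsRealStable

lemma fun_ne_zero (hF : IsRealStable F) : F ≠ 0 :=
  fun h => hF.ne_zero (fun _ => Complex.I) (by simp) (congrFun h _)

-- Otherwise moving `z i` by `-F z / ∂ i F z`, which does not lower its imaginary part, hits a zero.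
lemma im_mul_conj_pos (hF : IsRealStable F) (i : ι) {z : ι → ℂ} (hz : ∀ k, 0 < (z k).im)
    (hi : ∂ i F z ≠ 0) : 0 < (F z * conj (∂ i F z)).im := by
  by_contra! hle
  have him : 0 ≤ (-F z / ∂ i F z).im := by
    have : (-F z / ∂ i F z).im = -(F z * conj (∂ i F z)).im / Complex.normSq (∂ i F z) := by
      simp only [Complex.div_im, Complex.mul_im, Complex.conj_re, Complex.conj_im, Complex.neg_im,
        Complex.neg_re]
      ring
    rw [this]
    exact div_nonneg (neg_nonneg.2 hle) (Complex.normSq_nonneg _)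
  refine hF.ne_zero (z + Pi.single i (-F z / ∂ i F z)) (fun k => ?_) ?_
  · by_cases hk : k = i
    · subst hk; simpa using add_pos_of_pos_of_nonneg (hz k) him
    · simpa [hk] using hz k
  · rw [hF.multiAffine, div_mul_cancel₀ _ hi, add_neg_cancel]

lemma im_mul_conj_nonneg [Finite ι] (hF : IsRealStable F) (i : ι) {z : ι → ℂ}
    (hz : ∀ k, 0 ≤ (z k).im) : 0 ≤ (F z * conj (∂ i F z)).im := by
  have interior : ∀ w : ι → ℂ, (∀ k, 0 < (w k).im) → 0 ≤ (F w * conj (∂ i F w)).im := by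
    intro w hw
    by_cases hi : ∂ i F w = 0
    · simp [hi]
    · exact (hF.im_mul_conj_pos i hw hi).le
  have hcont : Continuous fun w => (F w * conj (∂ i F w)).im :=
    Complex.continuous_im.comp (hF.multiAffine.continuous.mul
      (Complex.continuous_conj.comp (hF.multiAffine.partialDeriv i).continuous))
  have hpath : Continuous fun (e : ℝ) (k : ι) => z k + e * Complex.I := by fun_prop
  have hlim := ((hcont.comp hpath).tendsto 0).mono_left (nhdsWithin_le_nhds (s := Set.Ioi 0))
  simp only [Function.comp_def, Complex.ofReal_zero, zero_mul, add_zero] at hlim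
  refine ge_of_tendsto hlim ?_
  filter_upwards [self_mem_nhdsWithin] with e he
  exact interior _ fun k => by simpa using add_pos_of_nonneg_of_pos (hz k) he

lemma add_partialDeriv (hF : IsRealStable F) {a b : ι} (ha : IsRealStable (∂ a F))
    (hb : IsRealStable (∂ b F)) : IsRealStable (∂ a F + ∂ b F) where
  multiAffine := ha.multiAffine.add hb.multiAffine
  map_star z := by simp only [Pi.add_apply, ha.map_star, hb.map_star, star_add]
  ne_zero z hz hsum := by
    have pos_a := hF.im_mul_conj_pos a hz (ha.ne_zero z hz)
    have pos_b := hF.im_mul_conj_pos b hz (hb.ne_zero z hz)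
    have : (F z * conj (∂ a F z + ∂ b F z)).im = 0 := by
      rw [← Pi.add_apply, hsum, map_zero, mul_zero, Complex.zero_im]
    rw [map_add, mul_add, Complex.add_im] at this
    linarith

-- Apply `im_mul_conj_nonneg` at the point `x + √-1 e_j`.
lemma rayleigh [Finite ι] (hF : IsRealStable F) {i j : ι} (hij : i ≠ j) (x : ι → ℝ) :
    realRestrict F x * ∂ i (∂ j (realRestrict F)) x
      ≤ ∂ i (realRestrict F) x * ∂ j (realRestrict F) x := by
  have key := hF.im_mul_conj_nonneg i (z := (fun k => (x k : ℂ)) + Pi.single j Complex.I) (by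
    intro k
    by_cases hk : k = j
    · subst hk; simp
    · simp [hk])
  have hi := partialDeriv_star hF.map_star i
  rw [hF.multiAffine, hF.multiAffine.partialDeriv i, ← ofReal_realRestrict hF.map_star,
    ← ofReal_realRestrict hi, ← ofReal_realRestrict (partialDeriv_star hF.map_star j),
    ← ofReal_realRestrict (partialDeriv_star hi j), partialDeriv_comm j i] at key
  simp only [realRestrict_partialDeriv] at key
  simp only [map_add, map_mul, Complex.conj_ofReal, Complex.conj_I, Complex.mul_im, Complex.add_re,
    Complex.add_im, Complex.mul_re, Complex.neg_re, Complex.neg_im, Complex.ofReal_re,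
    Complex.ofReal_im, Complex.I_re, Complex.I_im] at key
  linarith

end IsRealStable

end RealStable

section Interlacing

variable {ι : Type*} [DecidableEq ι] [Finite ι] {F G : (ι → ℂ) → ℂ} {x : ι → ℝ}

namespace IsRealStable

lemma partialDeriv_eq_zero_of_le (hF : IsRealStable F) (hp : PosAbove (realRestrict F) x) {a : ι}
    {y : ι → ℝ} (hxy : x ≤ y) (hzero : ∂ a (realRestrict F) y = 0) {w : ι → ℝ} (hyw : y ≤ w) :
    ∂ a (realRestrict F) w = 0 := by
  have hf := hF.multiAffine.realRestrict
  have hnonneg : ∀ w, x ≤ w → 0 ≤ ∂ a (realRestrict F) w :=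
    fun w => hf.partialDeriv_nonneg (fun v hv => (hp v hv).le) a
  refine orthant_induction (Q := fun w => ∂ a (realRestrict F) w = 0) hzero ?_ w hyw
  intro w hyw hw i t ht
  obtain rfl | hia := eq_or_ne i a
  · rw [hf.partialDeriv_add_single_same, hw]
  · have hxw := hxy.trans hyw
    have second_nonpos : ∂ i (∂ a (realRestrict F)) w ≤ 0 := by
      have hrayleigh := hF.rayleigh hia w
      rw [hw, mul_zero] at hrayleigh
      exact nonpos_of_mul_nonpos_right hrayleigh (hp w hxw)
    refine le_antisymm ?_ (hnonneg _ (le_add_single hxw i ht))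
    rw [hf.partialDeriv a, hw, zero_add]
    exact mul_nonpos_of_nonneg_of_nonpos ht second_nonpos

lemma posAbove_partialDeriv (hF : IsRealStable F) (hp : PosAbove (realRestrict F) x) {a : ι}
    (ha : ∂ a F ≠ 0) : PosAbove (∂ a (realRestrict F)) x := by
  intro y hxy
  refine lt_of_le_of_ne (hF.multiAffine.realRestrict.partialDeriv_nonneg
    (fun v hv => (hp v hv).le) a hxy) fun hzero => ha ?_
  refine (hF.multiAffine.partialDeriv a).eq_zero_of_forall_mem
    (T := fun i => Complex.ofReal '' Set.Ici (y i))
    (fun i => (Set.Ici_infinite (y i)).nontrivial.image Complex.ofReal_injective) fun z hz => ?_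
  choose w hyw hw using hz
  obtain rfl : (fun i => (w i : ℂ)) = z := funext hw
  rw [← ofReal_realRestrict (partialDeriv_star hF.map_star a), realRestrict_partialDeriv,
    hF.partialDeriv_eq_zero_of_le hp hxy hzero.symm hyw, Complex.ofReal_zero]

lemma posAbove_of_posAbove_partialDeriv (hG : IsRealStable G) {b : ι}
    (hb : PosAbove (∂ b (realRestrict G)) x) (hx : 0 < realRestrict G x) :
    PosAbove (realRestrict G) x := by
  have hg := hG.multiAffine.realRestrict
  refine orthant_induction (Q := fun y => 0 < realRestrict G y) hx ?_
  intro y hxy hy i t ht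
  rw [hg]
  obtain rfl | hib := eq_or_ne i b
  · exact add_pos_of_pos_of_nonneg hy (mul_nonneg ht (hb y hxy).le)
  · have hderiv := hb _ (le_add_single hxy i ht)
    rw [hg.partialDeriv b] at hderiv
    have hprod : 0 < (realRestrict G y + t * ∂ i (realRestrict G) y) * ∂ b (realRestrict G) y := by
      nlinarith [mul_pos hy hderiv, mul_le_mul_of_nonneg_left (hG.rayleigh hib y) ht]
    exact pos_of_mul_pos_left hprod (hb y hxy).le

lemma posAbove_partialDeriv_or (hF : IsRealStable F) {a b : ι} (ha : IsRealStable (∂ a F))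
    (hb : IsRealStable (∂ b F)) (hab : ∂ a (∂ b F) ≠ 0)
    (hp : PosAbove (realRestrict (∂ a F + ∂ b F)) x) :
    PosAbove (realRestrict (∂ a F)) x ∨ PosAbove (realRestrict (∂ b F)) x := by
  have hderiv : ∂ b (∂ a F + ∂ b F) = ∂ a (∂ b F) := by
    rw [partialDeriv_add, hF.multiAffine.partialDeriv_self, partialDeriv_comm, add_zero]
  have hmixed := (hF.add_partialDeriv ha hb).posAbove_partialDeriv hp (hderiv ▸ hab)
  rw [← realRestrict_partialDeriv, hderiv, realRestrict_partialDeriv] at hmixed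
  have hsum : 0 < realRestrict (∂ a F) x + realRestrict (∂ b F) x := hp x le_rfl
  by_cases hx : 0 < realRestrict (∂ a F) x
  · refine Or.inl (ha.posAbove_of_posAbove_partialDeriv (b := b) ?_ hx)
    rwa [realRestrict_partialDeriv, partialDeriv_comm, ← realRestrict_partialDeriv b]
  · exact Or.inr (hb.posAbove_of_posAbove_partialDeriv hmixed (by linarith))

end IsRealStable

end Interlacing

section Barrier

-- Below `p, pa, pb, pj, pab, …` are the values of a polynomial and of its derivatives at a point,
-- and `X`, `Da`, `Db` are up to positive factors minus the derivatives along `j` of `pab / p`,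
-- `pa / p`, `pb / p`.

lemma sq_le_of_forall_rayleigh {p pa pb pj pab paj pbj pabj : ℝ}
    (h : ∀ t : ℝ, (p + t * pb) * (paj + t * pabj) ≤ (pa + t * pab) * (pj + t * pbj)) :
    (p * (pj * pab - p * pabj) - (pa * (pb * pj - p * pbj) + pb * (pa * pj - p * paj))) ^ 2
      ≤ 4 * (pa * pb - p * pab) * (pa * pj - p * paj) * (pb * pj - p * pbj) := by
  have hdiscrim : discrim (pab * pbj - pb * pabj)
      (pa * pbj + pab * pj - p * pabj - pb * paj) (pa * pj - p * paj) ≤ 0 :=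
    discrim_le_zero fun t => by linarith [h t]
  rw [discrim] at hdiscrim
  linarith [mul_nonpos_of_nonneg_of_nonpos (sq_nonneg p) hdiscrim]

lemma le_of_sq_le_of_barrier {p pa pb pab Da Db X s : ℝ} (hp : 0 < p) (hpa : 0 < pa) (hpb : 0 < pb)
    (hpab : 0 ≤ pab) (hs : 0 ≤ s) (hDa : 0 ≤ Da) (hDb : 0 ≤ Db) (hsp : 2 * s * (pa + pb) ≤ p)
    (hsq : (p * X - (pa * Db + pb * Da)) ^ 2 ≤ 4 * (pa * pb - p * pab) * Da * Db) :
    2 * s * X ≤ Da + Db := by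
  have hpX : p * X ≤ (pa + pb) * (Da + Db) := by
    have hsq' : (p * X - (pa * Db + pb * Da)) ^ 2 ≤ (pa * Da + pb * Db) ^ 2 := by
      have : 0 ≤ p * pab * Da * Db := by positivity
      nlinarith [sq_nonneg (pa * Da - pb * Db)]
    linarith [(abs_le_of_sq_le_sq' hsq' (by positivity)).2]
  obtain hX | hX := le_or_gt X 0
  · exact (mul_nonpos_of_nonneg_of_nonpos (by positivity) hX).trans (by positivity)
  · refine le_of_mul_le_mul_left ?_ (add_pos hpa hpb)
    calc (pa + pb) * (2 * s * X) = 2 * s * (pa + pb) * X := by ring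
      _ ≤ p * X := mul_le_mul_of_nonneg_right hsp hX.le
      _ ≤ (pa + pb) * (Da + Db) := hpX

variable {ι : Type*} [DecidableEq ι] [Finite ι] {F : (ι → ℂ) → ℂ} {x y : ι → ℝ} {a b : ι} {s : ℝ}

namespace IsRealStable

lemma partialDeriv_add_partialDeriv_pos (hF : IsRealStable F) (hp : PosAbove (realRestrict F) x)
    (ha : ∂ a F ≠ 0) (hb : ∂ b F ≠ 0) (hab : a ≠ b) (hs : 0 ≤ s)
    (hxw : x ≤ y + Pi.single a s + Pi.single b s)
    (hbar : 2 * s * (∂ a (realRestrict F) + ∂ b (realRestrict F))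
        (y + Pi.single a s + Pi.single b s)
      ≤ realRestrict F (y + Pi.single a s + Pi.single b s)) :
    0 < (∂ a (realRestrict F) + ∂ b (realRestrict F)) y := by
  rw [hF.multiAffine.realRestrict.add_partialDeriv_apply a b y s]
  set w := y + Pi.single a s + Pi.single b s
  have hrayleigh := hF.rayleigh hab w
  have hpw := hp w hxw
  have hpa := hF.posAbove_partialDeriv hp ha w hxw
  have hpb := hF.posAbove_partialDeriv hp hb w hxw
  simp only [Pi.add_apply] at hbar ⊢
  set p := realRestrict F w
  set pa := ∂ a (realRestrict F) w
  set pb := ∂ b (realRestrict F) w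
  set pab := ∂ a (∂ b (realRestrict F)) w
  refine pos_of_mul_pos_left (b := p) ?_ hpw.le
  have hsa : 2 * s * pa ≤ p := by nlinarith
  calc 0 < pa * p := mul_pos hpa hpw
    _ ≤ pa * p + (p - 2 * s * pa) * pb :=
        le_add_of_nonneg_right (mul_nonneg (sub_nonneg.2 hsa) hpb.le)
    _ = (pa + pb) * p - 2 * s * (pa * pb) := by ring
    _ ≤ (pa + pb) * p - 2 * s * (p * pab) := by gcongr
    _ = (pa + pb - 2 * s * pab) * p := by ring

lemma partialDeriv_add_partialDeriv_mul_le (hF : IsRealStable F)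
    (hp : PosAbove (realRestrict F) x) (ha : ∂ a F ≠ 0) (hb : ∂ b F ≠ 0) {j : ι} (hja : j ≠ a)
    (hjb : j ≠ b) (hs : 0 ≤ s) (hxw : x ≤ y + Pi.single a s + Pi.single b s)
    (hbar : 2 * s * (∂ a (realRestrict F) + ∂ b (realRestrict F))
        (y + Pi.single a s + Pi.single b s)
      ≤ realRestrict F (y + Pi.single a s + Pi.single b s)) :
    ∂ j (∂ a (realRestrict F) + ∂ b (realRestrict F)) y
        * realRestrict F (y + Pi.single a s + Pi.single b s)
      ≤ ∂ j (realRestrict F) (y + Pi.single a s + Pi.single b s)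
        * (∂ a (realRestrict F) + ∂ b (realRestrict F)) y := by
  have hf := hF.multiAffine.realRestrict
  have hpb' := hF.posAbove_partialDeriv hp hb
  rw [partialDeriv_add, partialDeriv_comm j a, partialDeriv_comm j b,
    (hf.partialDeriv j).add_partialDeriv_apply a b y s, hf.add_partialDeriv_apply a b y s]
  set w := y + Pi.single a s + Pi.single b s
  have hpab := (hf.partialDeriv b).partialDeriv_nonneg (fun v hv => (hpb' v hv).le) a hxw
  have hDa := sub_nonneg.2 (hF.rayleigh hja.symm w)
  have hDb := sub_nonneg.2 (hF.rayleigh hjb.symm w)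
  have hsq := sq_le_of_forall_rayleigh (p := realRestrict F w) (pa := ∂ a (realRestrict F) w)
    (pb := ∂ b (realRestrict F) w) (pj := ∂ j (realRestrict F) w)
    (pab := ∂ a (∂ b (realRestrict F)) w) (paj := ∂ a (∂ j (realRestrict F)) w)
    (pbj := ∂ b (∂ j (realRestrict F)) w) (pabj := ∂ a (∂ b (∂ j (realRestrict F))) w) (by
      intro t
      have hrayleigh := hF.rayleigh hja.symm (w + Pi.single b t)
      rwa [hf, hf.partialDeriv a, hf.partialDeriv j, (hf.partialDeriv j).partialDeriv a,
        partialDeriv_comm b a, partialDeriv_comm b a] at hrayleigh)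
  have := le_of_sq_le_of_barrier (hp w hxw) (hF.posAbove_partialDeriv hp ha w hxw) (hpb' w hxw)
    hpab hs hDa hDb hbar hsq
  simp only [Pi.add_apply]
  linarith

end IsRealStable

end Barrier

section IteratedDerivatives

variable {ι α K : Type*} [DecidableEq ι] [DecidableEq α]

/-- The mixed partial derivative with respect to all variables listed in `L`. -/
def iterDeriv [Ring K] (L : List ι) (F : (ι → K) → K) : (ι → K) → K :=
  L.foldr partialDeriv F

/-- For a polynomial in two copies `z (i, false)`, `z (i, true)` of each variable, the sum of the
derivatives with respect to the two copies of the `i`-th variable. -/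
def pairSum [Ring K] (i : α) (F : (α × Bool → K) → K) : (α × Bool → K) → K :=
  ∂ (i, false) F + ∂ (i, true) F

/-- The composition of the operators `pairSum i` for `i` in the list `l`. -/
def iterPairSum [Ring K] (l : List α) (F : (α × Bool → K) → K) : (α × Bool → K) → K :=
  l.foldr pairSum F

lemma iterDeriv_partialDeriv [Ring K] (L : List ι) (a : ι) (F : (ι → K) → K) :
    iterDeriv L (∂ a F) = ∂ a (iterDeriv L F) := by
  induction L with
  | nil => rfl
  | cons b L ih => exact (congrArg (∂ b) ih).trans (partialDeriv_comm b a _)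

lemma iterPairSum_partialDeriv [Ring K] (l : List α) (p : α × Bool) (F : (α × Bool → K) → K) :
    iterPairSum l (∂ p F) = ∂ p (iterPairSum l F) := by
  induction l with
  | nil => rfl
  | cons i l ih =>
    change pairSum i (iterPairSum l (∂ p F)) = ∂ p (pairSum i (iterPairSum l F))
    rw [ih, pairSum, pairSum, partialDeriv_add, partialDeriv_comm, partialDeriv_comm p (i, true)]

lemma realRestrict_pairSum (i : α) (F : (α × Bool → ℂ) → ℂ) :
    realRestrict (pairSum i F) = pairSum i (realRestrict F) := by
  rw [pairSum, realRestrict_add, realRestrict_partialDeriv, realRestrict_partialDeriv, pairSum]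

/-- Real stability of all the partial derivatives of order at most one in each variable. In general
such derivatives of a real stable polynomial may vanish identically. -/
def HasStableDerivs (F : (ι → ℂ) → ℂ) : Prop :=
  ∀ L : List ι, L.Nodup → IsRealStable (iterDeriv L F)

namespace HasStableDerivs

variable {F : (α × Bool → ℂ) → ℂ} {l : List α} {L : List (α × Bool)}

lemma isRealStable_iterPairSum (hF : HasStableDerivs F) (hl : l.Nodup) (hL : L.Nodup)
    (hlL : ∀ p ∈ L, p.1 ∉ l) : IsRealStable (iterPairSum l (iterDeriv L F)) := by
  induction l generalizing L with
  | nil => exact hF L hL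
  | cons i l ih =>
    obtain ⟨hil, hl⟩ := List.nodup_cons.1 hl
    have hlL' : ∀ p ∈ L, p.1 ∉ l := fun p hp => mt (List.mem_cons_of_mem i) (hlL p hp)
    have stable_deriv : ∀ c, IsRealStable (∂ (i, c) (iterPairSum l (iterDeriv L F))) := by
      intro c
      rw [← iterPairSum_partialDeriv]
      exact ih (L := (i, c) :: L) hl
        (List.nodup_cons.2 ⟨fun hic => hlL _ hic List.mem_cons_self, hL⟩)
        (List.forall_mem_cons.2 ⟨hil, hlL'⟩)
    exact (ih hl hL hlL').add_partialDeriv (stable_deriv false) (stable_deriv true)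

lemma isRealStable_partialDeriv_iterPairSum (hF : HasStableDerivs F) (hl : l.Nodup)
    (hL : L.Nodup) (hlL : ∀ p ∈ L, p.1 ∉ l) {q : α × Bool} (hq : q.1 ∉ l) (hqL : q ∉ L) :
    IsRealStable (∂ q (iterPairSum l (iterDeriv L F))) := by
  rw [← iterPairSum_partialDeriv]
  exact hF.isRealStable_iterPairSum (L := q :: L) hl (List.nodup_cons.2 ⟨hqL, hL⟩)
    (List.forall_mem_cons.2 ⟨hq, hlL⟩)

lemma exists_posAbove_iterPairSum_cons [Finite α] (hF : HasStableDerivs F) {i : α}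
    (hil : (i :: l).Nodup) (hL : L.Nodup) (hlL : ∀ p ∈ L, p.1 ∉ i :: l) {x : α × Bool → ℝ}
    (hp : PosAbove (realRestrict (iterPairSum (i :: l) (iterDeriv L F))) x) :
    ∃ c, PosAbove (realRestrict (iterPairSum l (iterDeriv ((i, c) :: L) F))) x := by
  obtain ⟨hil, hl⟩ := List.nodup_cons.1 hil
  have hlL' : ∀ p ∈ L, p.1 ∉ l := fun p hp => mt (List.mem_cons_of_mem i) (hlL p hp)
  have hiL : ∀ c, (i, c) ∉ L := fun c hic => hlL _ hic List.mem_cons_self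
  have stable_deriv := fun c =>
    hF.isRealStable_partialDeriv_iterPairSum hl hL hlL' (q := (i, c)) hil (hiL c)
  have mixed_ne_zero : ∂ (i, false) (∂ (i, true) (iterPairSum l (iterDeriv L F))) ≠ 0 := by
    rw [← iterPairSum_partialDeriv]
    exact (hF.isRealStable_partialDeriv_iterPairSum (L := (i, true) :: L) hl
      (List.nodup_cons.2 ⟨hiL true, hL⟩) (List.forall_mem_cons.2 ⟨hil, hlL'⟩) hil
      (by simpa using hiL false)).fun_ne_zero
  have := (hF.isRealStable_iterPairSum hl hL hlL').posAbove_partialDeriv_or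
    (stable_deriv false) (stable_deriv true) mixed_ne_zero hp
  simp only [← iterPairSum_partialDeriv] at this
  exact this.elim (fun h => ⟨false, h⟩) fun h => ⟨true, h⟩

lemma exists_posAbove_iterDeriv [Finite α] (hF : HasStableDerivs F) (hl : l.Nodup) (hL : L.Nodup)
    (hlL : ∀ p ∈ L, p.1 ∉ l) {x : α × Bool → ℝ}
    (hp : PosAbove (realRestrict (iterPairSum l (iterDeriv L F))) x) :
    ∃ χ : α → Bool,
      PosAbove (realRestrict (iterDeriv (l.map fun i => (i, χ i)) (iterDeriv L F))) x := by
  induction l generalizing L with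
  | nil => exact ⟨fun _ => false, hp⟩
  | cons i l ih =>
    obtain ⟨c, hc⟩ := hF.exists_posAbove_iterPairSum_cons hl hL hlL hp
    obtain ⟨hil, hl⟩ := List.nodup_cons.1 hl
    have hiL : (i, c) ∉ L := fun hic => hlL _ hic List.mem_cons_self
    obtain ⟨χ, hχ⟩ := ih hl (List.nodup_cons.2 ⟨hiL, hL⟩)
      (List.forall_mem_cons.2 ⟨hil, fun p hp => mt (List.mem_cons_of_mem i) (hlL p hp)⟩) hc
    refine ⟨Function.update χ i c, ?_⟩
    have hmap : (l.map fun j => (j, Function.update χ i c j)) = l.map fun j => (j, χ j) :=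
      List.map_congr_left fun j hj => by
        rw [Function.update_of_ne (ne_of_mem_of_not_mem hj hil)]
    rw [List.map_cons, Function.update_self, hmap]
    change PosAbove (realRestrict (∂ (i, c) (iterDeriv _ (iterDeriv L F)))) x
    rwa [← iterDeriv_partialDeriv]

end HasStableDerivs

lemma le_add_single_pair {l : List α} {i : α} (hil : i ∉ l) {b s : ℝ} {y : α × Bool → ℝ}
    (hy : (fun p => if p.1 ∈ i :: l then b - s else b) ≤ y) :
    (fun p => if p.1 ∈ l then b - s else b)
      ≤ y + Pi.single (i, false) s + Pi.single (i, true) s := by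
  rintro ⟨j, c⟩
  have hyj := hy (j, c)
  obtain rfl | hji := eq_or_ne j i
  · cases c <;> simpa [hil] using hyj
  · simpa [hji] using hyj

lemma IsRealStable.barrier_pairSum [Finite α] {G : (α × Bool → ℂ) → ℂ} (hG : IsRealStable G)
    {x y : α × Bool → ℝ} (hp : PosAbove (realRestrict G) x) {i j : α} (hji : j ≠ i)
    (hi : ∀ c, ∂ (i, c) G ≠ 0) {s : ℝ} (hs : 0 ≤ s) {w : α × Bool → ℝ}
    (hw : w = y + Pi.single (i, false) s + Pi.single (i, true) s) (hxw : x ≤ w)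
    (hbar : ∀ k, k = i ∨ k = j → 2 * s * pairSum k (realRestrict G) w ≤ realRestrict G w) :
    2 * s * pairSum j (pairSum i (realRestrict G)) y ≤ pairSum i (realRestrict G) y := by
  subst hw
  have hbar_i := hbar i (Or.inl rfl)
  have sum_pos :=
    hG.partialDeriv_add_partialDeriv_pos hp (hi false) (hi true) (by simp) hs hxw hbar_i
  have step := fun c => hG.partialDeriv_add_partialDeriv_mul_le (j := (j, c)) hp
    (hi false) (hi true) (by simp [hji]) (by simp [hji]) hs hxw hbar_i
  set w := y + Pi.single (i, false) s + Pi.single (i, true) s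
  refine le_of_mul_le_mul_right ?_ (hp w hxw)
  calc 2 * s * pairSum j (pairSum i (realRestrict G)) y * realRestrict G w
      = 2 * s * (∂ (j, false) (pairSum i (realRestrict G)) y * realRestrict G w
        + ∂ (j, true) (pairSum i (realRestrict G)) y * realRestrict G w) := by
        rw [pairSum, Pi.add_apply]; ring
    _ ≤ 2 * s * (∂ (j, false) (realRestrict G) w * pairSum i (realRestrict G) y
        + ∂ (j, true) (realRestrict G) w * pairSum i (realRestrict G) y) :=
        mul_le_mul_of_nonneg_left (add_le_add (step false) (step true)) (by positivity)
    _ = 2 * s * pairSum j (realRestrict G) w * pairSum i (realRestrict G) y := by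
        rw [pairSum.eq_def j, Pi.add_apply]; ring
    _ ≤ realRestrict G w * pairSum i (realRestrict G) y :=
        mul_le_mul_of_nonneg_right (hbar j (Or.inr rfl)) sum_pos.le
    _ = pairSum i (realRestrict G) y * realRestrict G w := mul_comm _ _

lemma HasStableDerivs.barrier_iterPairSum [Finite α] {F : (α × Bool → ℂ) → ℂ} {l : List α}
    (hF : HasStableDerivs F) {b s : ℝ} (hs : 0 ≤ s) (hp : PosAbove (realRestrict F) fun _ => b)
    (hbar : ∀ i y, (fun _ => b) ≤ y → 2 * s * pairSum i (realRestrict F) y ≤ realRestrict F y)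
    (hl : l.Nodup) :
    PosAbove (realRestrict (iterPairSum l F)) (fun p => if p.1 ∈ l then b - s else b) ∧
    ∀ i ∉ l, ∀ y, (fun p => if p.1 ∈ l then b - s else b) ≤ y →
      2 * s * pairSum i (realRestrict (iterPairSum l F)) y ≤ realRestrict (iterPairSum l F) y := by
  induction l with
  | nil =>
    simp only [List.not_mem_nil, if_false]
    exact ⟨hp, fun i _ => hbar i⟩
  | cons i l ih =>
    obtain ⟨hil, hl⟩ := List.nodup_cons.1 hl
    obtain ⟨hpos, hbarrier⟩ := ih hl
    have hG : IsRealStable (iterPairSum l F) :=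
      hF.isRealStable_iterPairSum (L := []) hl List.nodup_nil (by simp)
    have ne_zero : ∀ c, ∂ (i, c) (iterPairSum l F) ≠ 0 := fun c =>
      (hF.isRealStable_partialDeriv_iterPairSum (L := []) hl List.nodup_nil (by simp) hil
        (by simp)).fun_ne_zero
    rw [show iterPairSum (i :: l) F = pairSum i (iterPairSum l F) from rfl, realRestrict_pairSum]
    refine ⟨fun y hy => ?_, fun j hj y hy => ?_⟩
    · exact hG.partialDeriv_add_partialDeriv_pos hpos (ne_zero false) (ne_zero true) (by simp) hs
        (le_add_single_pair hil hy) (hbarrier i hil _ (le_add_single_pair hil hy))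
    · obtain ⟨hji, hjl⟩ := not_or.1 (mt List.mem_cons.2 hj)
      refine hG.barrier_pairSum hpos hji ne_zero hs rfl (le_add_single_pair hil hy) ?_
      rintro k (rfl | rfl)
      exacts [hbarrier k hil _ (le_add_single_pair hil hy),
        hbarrier k hjl _ (le_add_single_pair hil hy)]

end IteratedDerivatives

section PencilMinor

variable {m R : Type*} [Fintype m] [DecidableEq m]

/-- The matrix `diag z - A` with the rows indexed by `S` replaced by the corresponding unit
vectors. -/
def pencil [Ring R] (A : Matrix m m R) (S : Finset m) (z : m → R) : Matrix m m R :=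
  .of fun i => if i ∈ S then Pi.single i 1 else Pi.single i (z i) - A i

/-- The principal minor of `diag z - A` obtained by deleting the rows and columns indexed by `S`. -/
def pencilMinor [CommRing R] (A : Matrix m m R) (S : Finset m) (z : m → R) : R :=
  (pencil A S z).det

omit [Fintype m] in
lemma pencil_empty [Ring R] (A : Matrix m m R) (z : m → R) :
    pencil A ∅ z = diagonal z - A := by
  ext i j
  obtain rfl | hij := eq_or_ne i j
  · simp [pencil]
  · simp [pencil, hij, hij.symm]

section CommRing

variable [CommRing R]

lemma pencilMinor_add_single (A : Matrix m m R) {S : Finset m} {i : m} (hi : i ∉ S) (z : m → R)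
    (t : R) :
    pencilMinor A S (z + Pi.single i t) = pencilMinor A S z + t * pencilMinor A (insert i S) z := by
  have hrow : pencil A S (z + Pi.single i t)
      = (pencil A S z).updateRow i (pencil A S z i + t • Pi.single i 1) := by
    ext k j
    obtain rfl | hk := eq_or_ne k i
    · simp only [pencil, of_apply, hi, if_false, updateRow_self, Pi.add_apply, Pi.sub_apply,
        Pi.smul_apply, Pi.single_add, Pi.single_apply, if_true, smul_eq_mul, mul_ite, mul_one,
        mul_zero]
      ring
    · simp [pencil, hk]
  have hinsert : pencil A (insert i S) z = (pencil A S z).updateRow i (Pi.single i 1) := by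
    ext k j
    obtain rfl | hk := eq_or_ne k i
    · simp [pencil]
    · simp [pencil, hk]
  rw [pencilMinor, hrow, det_updateRow_add, det_updateRow_smul, updateRow_eq_self, ← hinsert]
  rfl

lemma partialDeriv_pencilMinor (A : Matrix m m R) {S : Finset m} {i : m} (hi : i ∉ S) :
    ∂ i (pencilMinor A S) = pencilMinor A (insert i S) := by
  funext z
  change pencilMinor A S (z + Pi.single i 1) - pencilMinor A S z = _
  rw [pencilMinor_add_single A hi, one_mul, add_sub_cancel_left]

lemma pencilMinor_induction (A : Matrix m m R) {Q : ((m → R) → R) → Prop}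
    (empty : Q (pencilMinor A ∅)) (step : ∀ F i, Q F → Q (∂ i F)) (S : Finset m) :
    Q (pencilMinor A S) := by
  induction S using Finset.induction_on with
  | empty => exact empty
  | insert i S hi ih => exact partialDeriv_pencilMinor A hi ▸ step _ i ih

lemma isMultiAffine_pencilMinor (A : Matrix m m R) (S : Finset m) :
    IsMultiAffine (pencilMinor A S) := by
  refine pencilMinor_induction A (fun i z t => ?_) (fun F i hF => hF.partialDeriv i) S
  rw [pencilMinor_add_single A (Finset.notMem_empty i),
    partialDeriv_pencilMinor A (Finset.notMem_empty i)]

lemma pencilMinor_star [StarRing R] {A : Matrix m m R} (hA : A.IsHermitian) (S : Finset m)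
    (z : m → R) : pencilMinor A S (star z) = star (pencilMinor A S z) := by
  refine pencilMinor_induction A (Q := fun F => ∀ z, F (star z) = star (F z)) (fun z => ?_)
    (fun F i hF => partialDeriv_star hF i) S z
  rw [pencilMinor, pencilMinor, ← det_conjTranspose, pencil_empty, pencil_empty, conjTranspose_sub,
    hA.eq, diagonal_conjTranspose]

lemma iterDeriv_pencilMinor (A : Matrix m m R) {L : List m} (hL : L.Nodup) :
    iterDeriv L (pencilMinor A ∅) = pencilMinor A L.toFinset := by
  induction L with
  | nil => rfl
  | cons i L ih =>
    obtain ⟨hiL, hL⟩ := List.nodup_cons.1 hL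
    rw [List.toFinset_cons, ← partialDeriv_pencilMinor A (by simpa using hiL), ← ih hL]
    rfl

lemma pencil_mulVec_apply (A : Matrix m m R) (S : Finset m) (z v : m → R) (i : m) :
    (pencil A S z *ᵥ v) i = if i ∈ S then v i else z i * v i - (A *ᵥ v) i := by
  change (if i ∈ S then Pi.single i 1 else Pi.single i (z i) - A i) ⬝ᵥ v
    = if i ∈ S then v i else z i * v i - A i ⬝ᵥ v
  split_ifs
  · rw [single_dotProduct, one_mul]
  · rw [sub_dotProduct, single_dotProduct]

end CommRing

-- A kernel vector `v` vanishes on `S`, and `v* diag z v = v* A v` is real.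
lemma pencilMinor_ne_zero {A : Matrix m m ℂ} (hA : A.IsHermitian) (S : Finset m) {z : m → ℂ}
    (hz : ∀ i, 0 < (z i).im) : pencilMinor A S z ≠ 0 := by
  intro hdet
  obtain ⟨v, hv, hker⟩ := exists_mulVec_eq_zero_iff.2 hdet
  have row : ∀ i, star (v i) * (A *ᵥ v) i = z i * Complex.normSq (v i) := by
    intro i
    have hi := congrFun hker i
    rw [pencil_mulVec_apply, Pi.zero_apply] at hi
    rw [Complex.normSq_eq_conj_mul_self, starRingEnd_apply]
    split_ifs at hi
    · simp only [hi, star_zero, zero_mul, mul_zero]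
    · linear_combination -star (v i) * hi
  have sum_im : ∑ i, (z i).im * Complex.normSq (v i) = 0 := by
    have hreal := hA.im_star_dotProduct_mulVec_self v
    simpa only [dotProduct, Pi.star_apply, row, map_sum, RCLike.im_eq_complex_im,
      Complex.im_mul_ofReal] using hreal
  rw [Finset.sum_eq_zero_iff_of_nonneg
    fun i _ => mul_nonneg (hz i).le (Complex.normSq_nonneg _)] at sum_im
  exact hv <| funext fun i => Complex.normSq_eq_zero.1 <|
    (mul_eq_zero.1 (sum_im i (Finset.mem_univ i))).resolve_left (hz i).ne'

lemma isRealStable_pencilMinor {A : Matrix m m ℂ} (hA : A.IsHermitian) (S : Finset m) :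
    IsRealStable (pencilMinor A S) :=
  ⟨isMultiAffine_pencilMinor A S, pencilMinor_star hA S, fun _ hz => pencilMinor_ne_zero hA S hz⟩

lemma hasStableDerivs_pencilMinor {A : Matrix m m ℂ} (hA : A.IsHermitian) :
    HasStableDerivs (pencilMinor A ∅) := fun L hL => by
  rw [iterDeriv_pencilMinor A hL]
  exact isRealStable_pencilMinor hA L.toFinset

lemma posAbove_pencilMinor {A : Matrix m m ℂ} {b : ℝ}
    (hA : ((b : ℂ) • (1 : Matrix m m ℂ) - A).PosDef) :
    PosAbove (realRestrict (pencilMinor A ∅)) fun _ => b := by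
  intro y hy
  have hsum : pencil A ∅ (fun i => (y i : ℂ))
      = (b : ℂ) • (1 : Matrix m m ℂ) - A + diagonal fun i => ((y i - b : ℝ) : ℂ) := by
    rw [pencil_empty, smul_one_eq_diagonal, sub_add_eq_add_sub, diagonal_add]
    simp only [Complex.ofReal_sub, add_sub_cancel]
  have hdet := (hA.add_posSemidef (PosSemidef.diagonal (d := fun i => ((y i - b : ℝ) : ℂ))
    fun i => Complex.zero_le_real.2 (sub_nonneg.2 (hy i)))).det_pos
  rw [← hsum] at hdet
  exact (Complex.pos_iff.1 hdet).1

lemma mul_partialDeriv_le_pencilMinor {A : Matrix m m ℂ} {b κ : ℝ} {i : m}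
    (hA : ((b : ℂ) • (1 : Matrix m m ℂ) - A - (κ : ℂ) • diagonal (Pi.single i 1)).PosSemidef)
    {y : m → ℝ} (hy : (fun _ => b) ≤ y) :
    κ * ∂ i (realRestrict (pencilMinor A ∅)) y ≤ realRestrict (pencilMinor A ∅) y := by
  have hsum : pencil A ∅ (fun k => ((y + Pi.single i (-κ) : m → ℝ) k : ℂ))
      = (b : ℂ) • (1 : Matrix m m ℂ) - A - (κ : ℂ) • diagonal (Pi.single i 1)
        + diagonal fun k => ((y k - b : ℝ) : ℂ) := by
    rw [pencil_empty, ofReal_add_single, smul_one_eq_diagonal, ← diagonal_smul]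
    ext j k
    obtain rfl | hjk := eq_or_ne j k
    · simp only [Matrix.sub_apply, Matrix.add_apply, diagonal_apply_eq, Pi.add_apply, Pi.smul_apply,
        Pi.single_apply, Complex.ofReal_neg, Complex.ofReal_sub, smul_eq_mul]
      split_ifs <;> ring
    · simp [hjk]
  have hdet := (hA.add (PosSemidef.diagonal (d := fun i => ((y i - b : ℝ) : ℂ))
    fun i => Complex.zero_le_real.2 (sub_nonneg.2 (hy i)))).det_nonneg
  rw [← hsum] at hdet
  have hvalue : 0 ≤ realRestrict (pencilMinor A ∅) (y + Pi.single i (-κ)) :=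
    (Complex.nonneg_iff.1 hdet).1
  rw [(isMultiAffine_pencilMinor A ∅).realRestrict] at hvalue
  linarith

end PencilMinor

section Compression

variable {m : Type*} [Fintype m] [DecidableEq m]

/-- The diagonal projection onto the coordinates in `X`; this is `proj` over an arbitrary finite
index type. -/
def coordProj (X : Finset m) : Matrix m m ℂ :=
  diagonal fun i => if i ∈ X then 1 else 0

omit [Fintype m] in
lemma isHermitian_coordProj (X : Finset m) : (coordProj X).IsHermitian :=
  isHermitian_diagonal_of_self_adjoint _ <| funext fun i => by
    simp only [Pi.star_apply, apply_ite star, star_one, star_zero]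

lemma coordProj_mul_self (X : Finset m) : coordProj X * coordProj X = coordProj X := by
  simp only [coordProj, diagonal_mul_diagonal, ite_mul, one_mul, zero_mul]
  congr! 2 with i
  split_ifs <;> rfl

lemma posSemidef_smul_one_sub_of_det_ne_zero {H : Matrix m m ℂ} (hH : H.IsHermitian) {B : ℝ}
    (hdet : ∀ y : ℝ, B < y → (scalar m (y : ℂ) - H).det ≠ 0) :
    ((B : ℂ) • (1 : Matrix m m ℂ) - H).PosSemidef := by
  open scoped MatrixOrder in
  have hle : H ≤ algebraMap ℝ (Matrix m m ℂ) B := by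
    refine le_algebraMap_of_spectrum_le (fun y hy => ?_) hH.isSelfAdjoint
    by_contra! hBy
    refine spectrum.mem_iff.1 hy ((isUnit_iff_isUnit_det _).2 ?_)
    exact isUnit_iff_ne_zero.2 (hdet y hBy)
  have := le_iff.1 hle
  rwa [Algebra.algebraMap_eq_smul_one, ← Complex.coe_smul] at this

lemma det_scalar_sub_compression (A : Matrix m m ℂ) (S : Finset m) (y : ℂ) :
    (scalar m y - coordProj Sᶜ * A * coordProj Sᶜ).det
      = (∏ i, if i ∈ S then y else 1) * pencilMinor A S fun _ => y := by
  rw [← eval_charpoly, charpoly_mul_comm, ← mul_assoc, coordProj_mul_self, eval_charpoly,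
    pencilMinor, ← det_mul_column]
  congr 1
  ext i j
  by_cases hi : i ∈ S
  · simp [coordProj, pencil, hi, diagonal_mul, diagonal_apply, Pi.single_apply, eq_comm]
  · simp [coordProj, pencil, hi, diagonal_mul, diagonal_apply, Pi.single_apply, eq_comm]

lemma posSemidef_smul_one_sub_compression {A : Matrix m m ℂ} (hA : A.IsHermitian) {S : Finset m}
    {B : ℝ} (hB : 0 ≤ B) (hpos : PosAbove (realRestrict (pencilMinor A S)) fun _ => B) :
    ((B : ℂ) • (1 : Matrix m m ℂ) - coordProj Sᶜ * A * coordProj Sᶜ).PosSemidef := by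
  have hPAP := isHermitian_mul_mul_conjTranspose (coordProj Sᶜ) hA
  rw [(isHermitian_coordProj Sᶜ).eq] at hPAP
  refine posSemidef_smul_one_sub_of_det_ne_zero hPAP fun y hy => ?_
  rw [det_scalar_sub_compression]
  refine mul_ne_zero (Finset.prod_ne_zero_iff.2 fun i _ => ?_) fun hzero => ?_
  · split_ifs
    exacts [Complex.ofReal_ne_zero.2 (hB.trans_lt hy).ne', one_ne_zero]
  · have hvalue : 0 < (pencilMinor A S fun _ => (y : ℂ)).re := hpos (fun _ => y) fun _ => hy.le
    rw [hzero, Complex.zero_re] at hvalue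
    exact hvalue.false

end Compression

section Selection

variable {α : Type*} [Fintype α] [DecidableEq α]

lemma exists_posSemidef_smul_one_sub_compression {A : Matrix (α × Bool) (α × Bool) ℂ}
    (hA : A.IsHermitian) {b κ : ℝ} (hκ : 0 ≤ κ) (hb : 0 ≤ b - κ / 4)
    (hpos : ((b : ℂ) • (1 : Matrix (α × Bool) (α × Bool) ℂ) - A).PosDef)
    (hbar : ∀ p, ((b : ℂ) • (1 : Matrix (α × Bool) (α × Bool) ℂ) - A
      - (κ : ℂ) • diagonal (Pi.single p 1)).PosSemidef) :
    ∃ χ : α → Bool, (((b - κ / 4 : ℝ) : ℂ) • (1 : Matrix (α × Bool) (α × Bool) ℂ)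
      - coordProj {p : α × Bool | p.2 ≠ χ p.1} * A
        * coordProj {p : α × Bool | p.2 ≠ χ p.1}).PosSemidef := by
  have hF := hasStableDerivs_pencilMinor hA
  have hl : (Finset.univ : Finset α).toList.Nodup := Finset.nodup_toList _
  have barrier : ∀ i y, (fun _ => b) ≤ y →
      2 * (κ / 4) * pairSum i (realRestrict (pencilMinor A ∅)) y
        ≤ realRestrict (pencilMinor A ∅) y := by
    intro i y hy
    have hfalse := mul_partialDeriv_le_pencilMinor (hbar (i, false)) hy
    have htrue := mul_partialDeriv_le_pencilMinor (hbar (i, true)) hy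
    rw [pairSum, Pi.add_apply]
    linarith
  have hsum := (hF.barrier_iterPairSum (div_nonneg hκ zero_le_four) (posAbove_pencilMinor hpos)
    barrier hl).1
  simp only [Finset.mem_toList, Finset.mem_univ, if_true] at hsum
  obtain ⟨χ, hχ⟩ := hF.exists_posAbove_iterDeriv (L := []) hl List.nodup_nil (by simp) hsum
  have hnodup : ((Finset.univ : Finset α).toList.map fun i => (i, χ i)).Nodup :=
    hl.map fun i j hij => congrArg Prod.fst hij
  refine ⟨χ, ?_⟩
  have hS : ((Finset.univ : Finset α).toList.map fun i => (i, χ i)).toFinsetᶜ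
      = ({p | p.2 ≠ χ p.1} : Finset (α × Bool)) := by
    ext ⟨i, c⟩
    simp [eq_comm]
  rw [← hS]
  refine posSemidef_smul_one_sub_compression hA hb ?_
  rwa [← iterDeriv_pencilMinor A hnodup]

end Selection

section Paving

variable {m : Type*} [Fintype m] [DecidableEq m]

/-- A two-paving of `A` with bound `B`: a partition of the index set into two blocks such that both
compressions of `A` have largest eigenvalue at most `B`. -/
def HasTwoPaving (A : Matrix m m ℂ) (B : ℝ) : Prop :=
  ∃ X₁ X₂ : Finset m, Disjoint X₁ X₂ ∧ X₁ ∪ X₂ = Finset.univ ∧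
    ((B : ℂ) • (1 : Matrix m m ℂ) - coordProj X₁ * A * coordProj X₁).PosSemidef ∧
    ((B : ℂ) • (1 : Matrix m m ℂ) - coordProj X₂ * A * coordProj X₂).PosSemidef

lemma HasTwoPaving.of_posSemidef {A : Matrix m m ℂ} {B : ℝ} (hB : 0 ≤ B)
    (hA : ((B : ℂ) • (1 : Matrix m m ℂ) - A).PosSemidef) : HasTwoPaving A B := by
  have huniv : coordProj (Finset.univ : Finset m) = 1 := by simp [coordProj]
  have hempty : coordProj (∅ : Finset m) = 0 := by simp [coordProj]
  refine ⟨Finset.univ, ∅, Finset.disjoint_empty_right _, Finset.union_empty _, ?_, ?_⟩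
  · rwa [huniv, one_mul, mul_one]
  · rw [hempty, zero_mul, zero_mul, sub_zero]
    exact PosSemidef.one.smul (Complex.zero_le_real.2 hB)

omit [Fintype m] in
lemma smul_one_sub_kronecker_one (A : Matrix m m ℂ) (b : ℂ) :
    b • (1 : Matrix (m × Bool) (m × Bool) ℂ) - A ⊗ₖ (1 : Matrix Bool Bool ℂ)
      = (b • (1 : Matrix m m ℂ) - A) ⊗ₖ (1 : Matrix Bool Bool ℂ) := by
  rw [sub_eq_iff_eq_add, ← add_kronecker, sub_add_cancel, smul_kronecker, one_kronecker_one]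

omit [Fintype m] in
lemma posSemidef_kronecker_one_sub_smul_single [Finite m] {M : Matrix m m ℂ} {κ : ℝ}
    (hκ : 0 ≤ κ) {i : m}
    (hM : (M - (κ : ℂ) • diagonal (Pi.single i 1)).PosSemidef) (c : Bool) :
    (M ⊗ₖ (1 : Matrix Bool Bool ℂ) - (κ : ℂ) • diagonal (Pi.single (i, c) 1)).PosSemidef := by
  have hsum : M ⊗ₖ (1 : Matrix Bool Bool ℂ) - (κ : ℂ) • diagonal (Pi.single (i, c) 1)
      = (M - (κ : ℂ) • diagonal (Pi.single i 1)) ⊗ₖ (1 : Matrix Bool Bool ℂ)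
        + (κ : ℂ) • diagonal (Pi.single (i, !c) 1) := by
    ext ⟨j, d⟩ ⟨k, e⟩
    obtain rfl | hjk := eq_or_ne j k
    · obtain rfl | hji := eq_or_ne j i
      · cases c <;> cases d <;> cases e <;> simp
      · cases c <;> cases d <;> cases e <;> simp [hji]
    · simp [hjk]
  have hsingle : (diagonal (Pi.single (i, !c) 1) : Matrix (m × Bool) (m × Bool) ℂ).PosSemidef :=
    PosSemidef.diagonal (Pi.single_nonneg.2 zero_le_one)
  rw [hsum]
  exact (hM.kronecker PosSemidef.one).add (hsingle.smul (Complex.zero_le_real.2 hκ))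

lemma submatrix_smul_one_sub_compression_kronecker_one (A : Matrix m m ℂ) (B : ℂ)
    (X : Finset (m × Bool)) (c : Bool) :
    (B • (1 : Matrix (m × Bool) (m × Bool) ℂ)
        - coordProj X * (A ⊗ₖ (1 : Matrix Bool Bool ℂ)) * coordProj X).submatrix (·, c) (·, c)
      = B • (1 : Matrix m m ℂ) - coordProj {i | (i, c) ∈ X} * A * coordProj {i | (i, c) ∈ X} := by
  ext i j
  simp [coordProj, one_apply]

-- The selection is applied to `A ⊗ 1 = A ⊕ A`: a coordinate deleted from one of the two copies of
-- `A` is kept in the other.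
lemma HasTwoPaving.of_barrier {A : Matrix m m ℂ} (hA : A.IsHermitian) {b κ : ℝ} (hκ : 0 ≤ κ)
    (hb : 0 ≤ b - κ / 4) (hpos : ((b : ℂ) • (1 : Matrix m m ℂ) - A).PosDef)
    (hbar : ∀ i, ((b : ℂ) • (1 : Matrix m m ℂ) - A
      - (κ : ℂ) • diagonal (Pi.single i 1)).PosSemidef) : HasTwoPaving A (b - κ / 4) := by
  have hAA : (A ⊗ₖ (1 : Matrix Bool Bool ℂ)).IsHermitian := by
    rw [IsHermitian, conjTranspose_kronecker, hA.eq, conjTranspose_one]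
  obtain ⟨χ, hχ⟩ := exists_posSemidef_smul_one_sub_compression hAA hκ hb
    (smul_one_sub_kronecker_one A b ▸ hpos.kronecker PosDef.one)
    fun p => smul_one_sub_kronecker_one A b ▸
      posSemidef_kronecker_one_sub_smul_single hκ (hbar p.1) p.2
  have block := fun c => hχ.submatrix fun i => (i, c)
  simp only [submatrix_smul_one_sub_compression_kronecker_one, Finset.mem_filter, Finset.mem_univ,
    true_and] at block
  refine ⟨_, _, ?_, ?_, block false, block true⟩
  · exact Finset.disjoint_filter.2 fun i _ => by cases χ i <;> simp
  · ext i
    cases h : χ i <;> simp [h]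

-- Completing squares: with `P r = 1 - (κ / r) E`, the matrix is the sum of
-- `(b - 1) P (b - 1) A P (b - 1)`, of `b P b (1 - A) P b`, and of a nonnegative multiple of `E`.
lemma posSemidef_smul_one_sub_sub_smul {A E : Matrix m m ℂ} (hA : A.PosSemidef)
    (hA1 : (1 - A).PosSemidef) (hE : E.IsHermitian) (hEE : E * E = E) {a : ℝ}
    (hEAE : E * (A * E) = (a : ℂ) • E) {b κ : ℝ} (hb : 1 < b) (hκ : 0 ≤ κ)
    (hκb : κ * (a / (b - 1) + (1 - a) / b) ≤ 1) :
    ((b : ℂ) • (1 : Matrix m m ℂ) - A - (κ : ℂ) • E).PosSemidef := by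
  have hb1 : 0 < b - 1 := sub_pos.2 hb
  have hb0 : 0 < b := zero_lt_one.trans hb
  have congruence : ∀ {M : Matrix m m ℂ}, M.PosSemidef → ∀ {r : ℝ}, 0 ≤ r →
      ((r : ℂ) • ((1 - ((κ / r : ℝ) : ℂ) • E) * M * (1 - ((κ / r : ℝ) : ℂ) • E))).PosSemidef := by
    intro M hM r hr
    have := (hM.conjTranspose_mul_mul_same (1 - ((κ / r : ℝ) : ℂ) • E)).smul
      (Complex.zero_le_real.2 hr)
    rwa [conjTranspose_sub, conjTranspose_smul, hE.eq, conjTranspose_one, Complex.star_def,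
      Complex.conj_ofReal] at this
  have psd_E : (((κ * (1 - κ * (a / (b - 1) + (1 - a) / b)) : ℝ) : ℂ) • E).PosSemidef := by
    have := posSemidef_conjTranspose_mul_self E
    rw [hE.eq, hEE] at this
    exact this.smul (Complex.zero_le_real.2 (mul_nonneg hκ (sub_nonneg.2 hκb)))
  convert ((congruence hA hb1.le).add (congruence hA1 hb0.le)).add psd_E using 1
  have hb1' : ((b - 1 : ℝ) : ℂ) ≠ 0 := Complex.ofReal_ne_zero.2 hb1.ne'
  have hb0' : (b : ℂ) ≠ 0 := Complex.ofReal_ne_zero.2 hb0.ne'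
  simp only [sub_mul, mul_sub, smul_mul_assoc, mul_smul_comm, one_mul, mul_one, Matrix.mul_assoc,
    hEAE, hEE]
  push_cast at hb1' ⊢
  match_scalars <;> field_simp <;> ring

omit [Fintype m] in
lemma posSemidef_smul_one_sub_sub_smul_single [Finite m] {A : Matrix m m ℂ} (hA : A.PosSemidef)
    (hA1 : (1 - A).PosSemidef) {i : m} {δ : ℝ} (hi : (A i i).re ≤ δ) {b κ : ℝ} (hb : 1 < b)
    (hκ : 0 ≤ κ) (hκb : κ * (δ / (b - 1) + (1 - δ) / b) ≤ 1) :
    ((b : ℂ) • (1 : Matrix m m ℂ) - A - (κ : ℂ) • diagonal (Pi.single i 1)).PosSemidef := by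
  have := Fintype.ofFinite m
  have hAii : A i i = ((A i i).re : ℂ) := (hA.isHermitian.coe_re_apply_self i).symm
  have mono : (A i i).re / (b - 1) + (1 - (A i i).re) / b ≤ δ / (b - 1) + (1 - δ) / b := by
    have : (δ - (A i i).re) / b ≤ (δ - (A i i).re) / (b - 1) :=
      div_le_div_of_nonneg_left (sub_nonneg.2 hi) (sub_pos.2 hb) (sub_le_self b zero_le_one)
    rw [sub_div, sub_div] at this
    rw [sub_div, sub_div]
    linarith
  rw [diagonal_single]
  refine posSemidef_smul_one_sub_sub_smul hA hA1 ?_ ?_ ?_ hb hκ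
    ((mul_le_mul_of_nonneg_left mono hκ).trans hκb)
  · rw [IsHermitian, conjTranspose_single, star_one]
  · rw [single_mul_single_same, one_mul]
  · rw [← Matrix.mul_assoc, single_mul_mul_single, ← hAii, one_mul, mul_one,
      smul_single, smul_eq_mul, mul_one]

omit [Fintype m] in
lemma posDef_smul_one_sub {A : Matrix m m ℂ} (hA1 : (1 - A).PosSemidef) {b : ℝ} (hb : 1 < b) :
    ((b : ℂ) • (1 : Matrix m m ℂ) - A).PosDef := by
  have hsum : (b : ℂ) • (1 : Matrix m m ℂ) - A = ((b - 1 : ℝ) : ℂ) • 1 + (1 - A) := by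
    rw [Complex.ofReal_sub, Complex.ofReal_one, sub_smul, one_smul, sub_add_sub_cancel]
  rw [hsum]
  exact (PosDef.one.smul (Complex.zero_lt_real.2 (sub_pos.2 hb))).add_posSemidef hA1

omit [Fintype m] [DecidableEq m] in
lemma eq_zero_of_posSemidef_of_diag_nonpos [Finite m] {A : Matrix m m ℂ} (hA : A.PosSemidef)
    (hdiag : ∀ i, (A i i).re ≤ 0) : A = 0 := by
  have := Fintype.ofFinite m
  refine hA.trace_eq_zero_iff.1 (Finset.sum_eq_zero fun i _ => ?_)
  have hAii := Complex.nonneg_iff.1 (hA.diag_nonneg (i := i))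
  exact Complex.ext (le_antisymm (hdiag i) hAii.1) hAii.2.symm

end Paving

section Parameters

lemma paving_bound_one_fourth : 1 / 4 * (√(3 * (1 - 1 / 4)) + √(1 / 4)) ^ 2 = (1 : ℝ) := by
  rw [show (3 * (1 - 1 / 4) : ℝ) = (3 / 2) ^ 2 by norm_num,
    show (1 / 4 : ℝ) = (1 / 2) ^ 2 by norm_num, Real.sqrt_sq (by norm_num),
    Real.sqrt_sq (by norm_num)]
  norm_num

-- `b` minimizes the bound `b - κ / 4` when `κ` is given by equality in the third condition.
lemma exists_barrier_parameters {δ : ℝ} (hδ0 : 0 < δ) (hδ1 : δ < 1 / 4) :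
    ∃ b κ : ℝ, 1 < b ∧ 0 < κ ∧ κ * (δ / (b - 1) + (1 - δ) / b) ≤ 1 ∧
      b - κ / 4 = 1 / 4 * (√(3 * (1 - δ)) + √δ) ^ 2 := by
  have hu_sq : √(3 * (1 - δ)) ^ 2 = 3 * (1 - δ) := Real.sq_sqrt (by linarith)
  have hw_sq : √δ ^ 2 = δ := Real.sq_sqrt hδ0.le
  have hu : 0 < √(3 * (1 - δ)) := Real.sqrt_pos.2 (by linarith)
  have hw : 0 < √δ := Real.sqrt_pos.2 hδ0
  set u := √(3 * (1 - δ))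
  set w := √δ
  have hwu : 0 < u - 3 * w := by nlinarith
  have hb_sub_one : u * (u + w) / 3 - 1 = w * (u - 3 * w) / 3 := by linarith
  refine ⟨u * (u + w) / 3, (u - 3 * w) * (u + w) / 3, ?_, by positivity, ?_, by ring⟩
  · rw [← sub_pos, hb_sub_one]
    positivity
  · have hδu : 1 - δ = u ^ 2 / 3 := by linarith
    rw [hb_sub_one, hδu, ← hw_sq]
    refine le_of_eq ?_
    calc (u - 3 * w) * (u + w) / 3
          * (w ^ 2 / (w * (u - 3 * w) / 3) + u ^ 2 / 3 / (u * (u + w) / 3))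
        = (u ^ 2 + 3 * w ^ 2) / 3 := by
          field_simp
          ring
      _ = 1 := by linarith

end Parameters

end TwoPaving

open TwoPaving in
theorem two_paving_estimate_general {m : Type*} [Fintype m] [DecidableEq m] (δ : ℝ) (hδ0 : 0 ≤ δ)
    (hδ1 : δ ≤ 1 / 4) (A : Matrix m m ℂ) (hA : A.PosSemidef)
    (hA1 : ((1 : Matrix m m ℂ) - A).PosSemidef) (hdiag : ∀ i, (A i i).re ≤ δ) :
    HasTwoPaving A (1 / 4 * (√(3 * (1 - δ)) + √δ) ^ 2) := by
  have hB : 0 ≤ 1 / 4 * (√(3 * (1 - δ)) + √δ) ^ 2 := by positivity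
  obtain rfl | hδ_pos := hδ0.eq_or_lt
  · rw [eq_zero_of_posSemidef_of_diag_nonpos hA hdiag]
    refine .of_posSemidef hB ?_
    rw [sub_zero]
    exact PosSemidef.one.smul (Complex.zero_le_real.2 hB)
  obtain rfl | hδ_lt := hδ1.eq_or_lt
  · refine .of_posSemidef hB ?_
    rwa [paving_bound_one_fourth, Complex.ofReal_one, one_smul]
  obtain ⟨b, κ, hb, hκ, hκb, hbB⟩ := exists_barrier_parameters hδ_pos hδ_lt
  rw [← hbB] at hB ⊢
  exact .of_barrier hA.isHermitian hκ.le hB (posDef_smul_one_sub hA1 hb) fun i =>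
    posSemidef_smul_one_sub_sub_smul_single hA hA1 (hdiag i) hb hκ.le hκb

/-- Any positive contraction with diagonal entries at most `δ ≤ 1/4` admits a two-paving
with both blocks having largest eigenvalue at most `(1/4)(√(3(1-δ)) + √δ)²`. -/
theorem two_paving_estimate {n : ℕ} (δ : ℝ) (hδ0 : 0 ≤ δ) (hδ1 : δ ≤ 1/4)
    (A : Matrix (Fin n) (Fin n) ℂ)
    (hA : A.PosSemidef) (hA1 : ((1 : Matrix (Fin n) (Fin n) ℂ) - A).PosSemidef)
    (hdiag : ∀ i, (A i i).re ≤ δ) :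
    ∃ X₁ X₂ : Finset (Fin n), Disjoint X₁ X₂ ∧ X₁ ∪ X₂ = Finset.univ ∧
      ((((1/4 * (Real.sqrt (3*(1-δ)) + Real.sqrt δ)^2 : ℝ) : ℂ) • (1 : Matrix (Fin n) (Fin n) ℂ)
          - proj X₁ * A * proj X₁).PosSemidef) ∧
      ((((1/4 * (Real.sqrt (3*(1-δ)) + Real.sqrt δ)^2 : ℝ) : ℂ) • (1 : Matrix (Fin n) (Fin n) ℂ)
          - proj X₂ * A * proj X₂).PosSemidef) :=
  two_paving_estimate_general δ hδ0 hδ1 A hA hA1 hdiag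
end

section
/- Let 0 ≤ δ ≤ 4/9 and let A be an n×n complex Hermitian matrix with 0 ⪯ A ⪯ I whose diagonal entries all satisfy A_{ii} ≤ δ. Then there exists a partition X₁ ⊔ X₂ ⊔ X₃ = {1,…,n} into three pairwise disjoint sets such that the largest eigenvalue of P_{X₁}AP_{X₁} + P_{X₂}AP_{X₂} + P_{X₃}AP_{X₃} is at most (1/9)·(√(5(1−δ)) + 2√δ)², where P_X denotes the diagonal 0-1 projection matrix onto the coordinates in X. -/
open Polynomial Matrix
open scoped ComplexOrder

/-!
Give every index `i` three variables `x (i, k)` and consider `p x = det (diagonal x - A ⊗ₖ 1)`,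
where `1` is the identity matrix of order three; it is multiaffine and real stable. If `c` is a
colouring by `Fin 3`, then differentiating `p` once in each `x (i, k)` with `k ≠ c i` and setting
all variables equal to `t` gives the characteristic polynomial of the block-diagonal part of `A`
with respect to `c`, so a colouring is needed for which this has no zero above the claimed bound.

The sum of these mixed derivatives over all colourings is `∏ i, esymm₂ i` applied to `p`, where
`esymm₂ i` is the second elementary symmetric polynomial in the three derivatives at `i`. Because
of real stability, if the sum is positive above a point, then the colours can be fixed one index at
a time so that the remaining sum stays positive there.

Positivity of the whole sum is a barrier argument in the spirit of Marcus, Spielman and Srivastava.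
If the logarithmic derivatives at a point above the zeros are at most `φ`, then they remain so when
`esymm₂ i` is applied and the three coordinates at `i` are lowered by `4 / (9 * φ)`: along this
direction the polynomial is a cubic, and the claim follows from the partial fraction expansion of
a quotient of interlacing polynomials. Starting at `x = b` for all coordinates, `A * (1 - A) ⪰ 0`
allows `φ = (b - 1 + δ) / (b * (b - 1))`, and the optimal `b > 1` gives the bound.
-/

namespace Paving

open Filter Topology ComplexConjugate

theorem update_induction {σ α : Type*} [Finite σ] [DecidableEq σ] {P : (σ → α) → Prop}
    {z z' : σ → α} (h₀ : P z) (h : ∀ y i, P y → P (Function.update y i (z' i))) : P z' := by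
  cases nonempty_fintype σ
  have hP (s : Finset σ) : P (s.piecewise z' z) := by
    induction s using Finset.induction_on with
    | empty => rwa [Finset.piecewise_empty]
    | insert i s _ ih => rw [Finset.piecewise_insert]; exact h _ i ih
  simpa only [Finset.piecewise_univ] using hP Finset.univ

section Multiaffine

variable {σ R : Type*} [DecidableEq σ] [CommRing R]

/-- The `i`-th partial derivative of a function of the variables `σ`, encoded as the difference of
its values at `zᵢ = 1` and `zᵢ = 0`; on functions affine in `zᵢ` this is the usual derivative. -/
def coordDeriv (i : σ) : Module.End R ((σ → R) → R) where
  toFun f z := f (Function.update z i 1) - f (Function.update z i 0)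
  map_add' f g := by ext z; simp only [Pi.add_apply]; ring
  map_smul' c f := by ext z; simp only [Pi.smul_apply, smul_eq_mul, RingHom.id_apply]; ring

theorem coordDeriv_apply (i : σ) (f : (σ → R) → R) (z : σ → R) :
    coordDeriv i f z = f (Function.update z i 1) - f (Function.update z i 0) := rfl

theorem coordDeriv_update_self (i : σ) (f : (σ → R) → R) (z : σ → R) (t : R) :
    coordDeriv i f (Function.update z i t) = coordDeriv i f z := by
  simp only [coordDeriv_apply, Function.update_idem]

theorem commute_coordDeriv (i j : σ) :
    Commute (coordDeriv i : Module.End R ((σ → R) → R)) (coordDeriv j) := by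
  rcases eq_or_ne i j with rfl | hij
  · exact Commute.refl _
  · refine LinearMap.ext fun f => funext fun z => ?_
    simp only [Module.End.mul_apply, coordDeriv_apply, Function.update_comm hij]
    ring

theorem coordDeriv_mul_self (i : σ) :
    coordDeriv i * coordDeriv i = (0 : Module.End R ((σ → R) → R)) :=
  LinearMap.ext fun f => funext fun z => by
    simp only [Module.End.mul_apply, coordDeriv_apply i (coordDeriv i f), coordDeriv_update_self,
      sub_self, LinearMap.zero_apply, Pi.zero_apply]

/-- The derivative in the direction of the indicator vector of `K`. -/
def sumDeriv (K : Finset σ) : Module.End R ((σ → R) → R) := ∑ k ∈ K, coordDeriv k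

theorem sumDeriv_apply (K : Finset σ) (f : (σ → R) → R) (z : σ → R) :
    sumDeriv K f z = ∑ k ∈ K, coordDeriv k f z := by
  simp only [sumDeriv, LinearMap.sum_apply, Finset.sum_apply]

theorem sumDeriv_singleton (i : σ) :
    sumDeriv {i} = (coordDeriv i : Module.End R ((σ → R) → R)) :=
  Finset.sum_singleton _ _

/-- A function that is affine in each of its variables separately. -/
def IsMultiaffine (f : (σ → R) → R) : Prop :=
  ∀ z i t, f (Function.update z i t) = f (Function.update z i 0) + t * coordDeriv i f z

namespace IsMultiaffine

variable {f g : (σ → R) → R}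

theorem update_add (hf : IsMultiaffine f) (z : σ → R) (i : σ) (t : R) :
    f (Function.update z i (z i + t)) = f z + t * coordDeriv i f z := by
  have hz := hf z i (z i)
  rw [Function.update_eq_self] at hz
  rw [hf z i (z i + t), hz]
  ring

protected theorem add (hf : IsMultiaffine f) (hg : IsMultiaffine g) : IsMultiaffine (f + g) := by
  intro z i t
  rw [Pi.add_apply, hf z i t, hg z i t, map_add, Pi.add_apply, Pi.add_apply]
  ring

protected theorem smul (hf : IsMultiaffine f) (c : R) : IsMultiaffine (c • f) := by
  intro z i t
  rw [Pi.smul_apply, hf z i t, map_smul, Pi.smul_apply, Pi.smul_apply]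
  simp only [smul_eq_mul]
  ring

protected theorem zero : IsMultiaffine (0 : (σ → R) → R) := fun z i t => by
  simp only [map_zero, Pi.zero_apply, mul_zero, add_zero]

protected theorem coordDeriv (hf : IsMultiaffine f) (j : σ) : IsMultiaffine (coordDeriv j f) := by
  intro z i t
  rcases eq_or_ne i j with rfl | hij
  · rw [← Module.End.mul_apply, coordDeriv_mul_self, coordDeriv_update_self,
      coordDeriv_update_self, LinearMap.zero_apply, Pi.zero_apply, mul_zero, add_zero]
  · rw [← Module.End.mul_apply, commute_coordDeriv i j]
    simp only [Module.End.mul_apply, coordDeriv_apply j, Function.update_comm hij,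
      hf (Function.update z j _) i t]
    ring

protected theorem sumDeriv (hf : IsMultiaffine f) (K : Finset σ) :
    IsMultiaffine (sumDeriv K f) := by
  rw [sumDeriv, LinearMap.sum_apply]
  exact Finset.sum_induction _ _ (fun _ _ => IsMultiaffine.add) IsMultiaffine.zero fun k _ =>
    hf.coordDeriv k

end IsMultiaffine

theorem IsMultiaffine.eq_zero_of_forall_ge [Finite σ] {g : (σ → ℝ) → ℝ} (hg : IsMultiaffine g)
    (x : σ → ℝ) (h : ∀ y, x ≤ y → g y = 0) : g = 0 := by
  funext z
  suffices hz : ∀ w, (∀ i, w i = z i ∨ x i ≤ w i) → g w = 0 from hz z fun i => .inl rfl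
  refine update_induction (z := x)
    (P := fun y => ∀ w : σ → ℝ, (∀ i, w i = y i ∨ x i ≤ w i) → g w = 0) ?_ ?_
  · exact fun w hw => h w fun i => (hw i).elim Eq.ge id
  · intro y i ih w hw
    have hline {t : ℝ} (ht : x i ≤ t) : g (Function.update w i t) = 0 := by
      refine ih _ fun j => ?_
      rcases eq_or_ne j i with rfl | hj
      · exact .inr (by rwa [Function.update_self])
      · simpa only [Function.update_of_ne hj] using hw j
    have h₀ := hline le_rfl
    have h₁ := hline (le_add_of_nonneg_right zero_le_one)
    have hw' := hg w i (w i)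
    rw [hg w i] at h₀ h₁
    rw [Function.update_eq_self] at hw'
    rw [hw']
    linear_combination (1 - w i + x i) * h₀ + (w i - x i) * h₁

end Multiaffine

section Stable

variable {σ : Type*}

/-- The set of points all of whose coordinates lie in the open upper half-plane. -/
def upperHalf (σ : Type*) : Set (σ → ℂ) := {z | ∀ i, 0 < (z i).im}

variable [DecidableEq σ]

theorem update_mem_upperHalf {z : σ → ℂ} (hz : z ∈ upperHalf σ) (i : σ) {w : ℂ} (hw : 0 < w.im) :
    Function.update z i w ∈ upperHalf σ := by
  intro j
  rcases eq_or_ne j i with rfl | hj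
  · rwa [Function.update_self]
  · rw [Function.update_of_ne hj]; exact hz j

/-- Stability of a function of several complex variables: either it has no zero with all
coordinates in the upper half-plane or it vanishes at all these points. Including the second case
makes stability closed under limits and derivatives. -/
def IsStable (f : (σ → ℂ) → ℂ) : Prop :=
  (∀ z ∈ upperHalf σ, f z = 0) ∨ ∀ z ∈ upperHalf σ, f z ≠ 0

variable {f : (σ → ℂ) → ℂ}

theorem IsStable.im_mul_conj_nonneg (hs : IsStable f) (hf : IsMultiaffine f) {z : σ → ℂ}
    (hz : z ∈ upperHalf σ) (i : σ) : 0 ≤ (f z * conj (coordDeriv i f z)).im := by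
  rcases hs with h₀ | hne
  · rw [h₀ z hz, zero_mul, Complex.zero_im]
  by_contra! hneg
  have hD : coordDeriv i f z ≠ 0 := fun hD => by simp [hD] at hneg
  -- The affine function `t ↦ f (z + t eᵢ)` vanishes at `t = -f z / ∂ᵢf z`.
  have hroot := hf.update_add z i (-(f z) / coordDeriv i f z)
  rw [div_mul_cancel₀ _ hD, add_neg_cancel] at hroot
  refine hne _ (update_mem_upperHalf hz i ?_) hroot
  have him : (-(f z) / coordDeriv i f z).im
      = -(f z * conj (coordDeriv i f z)).im / Complex.normSq (coordDeriv i f z) := by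
    rw [div_eq_mul_inv, Complex.inv_def, ← mul_assoc, Complex.im_mul_ofReal, neg_mul,
      Complex.neg_im, div_eq_mul_inv]
  rw [Complex.add_im, him]
  exact add_pos (hz i) (div_pos (neg_pos.2 hneg) (Complex.normSq_pos.2 hD))

theorem isStable_of_im_mul_conj_nonneg [Finite σ] (hf : IsMultiaffine f)
    (h : ∀ z ∈ upperHalf σ, ∀ i, 0 ≤ (f z * conj (coordDeriv i f z)).im) : IsStable f := by
  by_contra! hns
  simp only [IsStable, not_or, not_forall, not_not] at hns
  obtain ⟨⟨z', hz', hfz'⟩, z, hz, hfz⟩ := hns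
  refine hfz' (update_induction (z := z) (z' := z') (P := fun y => y ∈ upperHalf σ ∧ f y = 0)
    ⟨hz, hfz⟩ ?_).2
  rintro y i ⟨hy, hfy⟩
  refine ⟨update_mem_upperHalf hy i (hz' i), ?_⟩
  -- Below the zero `y` in direction `i` the assumption has the wrong sign unless `∂ᵢf y = 0`.
  have hD : coordDeriv i f y = 0 := by
    set t : ℂ := -(((y i).im / 2 : ℝ) * Complex.I) with ht
    have him : (y i + t).im = (y i).im / 2 := by simp [ht]; ring
    have hpick := h _ (update_mem_upperHalf hy i (him ▸ half_pos (hy i))) i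
    rw [hf.update_add, coordDeriv_update_self, hfy, zero_add, mul_assoc, Complex.mul_conj,
      Complex.im_mul_ofReal] at hpick
    have ht' : t.im < 0 := by simp [ht, hy i]
    exact Complex.normSq_eq_zero.1 (le_antisymm
      (nonpos_of_mul_nonneg_right hpick ht') (Complex.normSq_nonneg _))
  have := hf.update_add y i (z' i - y i)
  rwa [add_sub_cancel, hD, hfy, mul_zero, add_zero] at this

theorem IsStable.im_mul_conj_sumDeriv_nonneg (hs : IsStable f) (hf : IsMultiaffine f) {z : σ → ℂ}
    (hz : z ∈ upperHalf σ) (K : Finset σ) : 0 ≤ (f z * conj (sumDeriv K f z)).im := by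
  rw [sumDeriv_apply, map_sum, Finset.mul_sum, Complex.im_sum]
  exact Finset.sum_nonneg fun k _ => hs.im_mul_conj_nonneg hf hz k

theorem nonneg_of_forall_pos_of_lt {F : ℝ → ℝ} {b : ℝ} (hF : ContinuousAt F 0) (hb : 0 < b)
    (h : ∀ ε, 0 < ε → ε < b → 0 ≤ F ε) : 0 ≤ F 0 := by
  have hev : ∀ᶠ ε in 𝓝[>] (0 : ℝ), 0 ≤ F ε := by
    filter_upwards [Ioo_mem_nhdsGT hb] with ε hε using h ε hε.1 hε.2
  exact ge_of_tendsto (hF.tendsto.mono_left nhdsWithin_le_nhds) hev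

protected theorem IsStable.sumDeriv [Finite σ] (hs : IsStable f) (hf : IsMultiaffine f)
    (K : Finset σ) : IsStable (sumDeriv K f) := by
  refine isStable_of_im_mul_conj_nonneg (hf.sumDeriv K) fun z hz i => ?_
  rcases hs with h₀ | hne
  · have hD (k : σ) {y} (hy : y ∈ upperHalf σ) : coordDeriv k f y = 0 := by
      have him : 0 < (y k + Complex.I).im := by simpa using add_pos (hy k) one_pos
      have h := hf.update_add y k Complex.I
      rwa [h₀ y hy, zero_add, h₀ _ (update_mem_upperHalf hy k him), eq_comm, mul_eq_zero,
        or_iff_right Complex.I_ne_zero] at h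
    simp [sumDeriv_apply, Finset.sum_eq_zero fun k _ => hD k hz]
  -- Since `Im (f · conj ∑ ∂ₖf) ≥ 0`, the perturbation `∑ ∂ₖf - iεf` has no zeros.
  set h : ℝ → (σ → ℂ) → ℂ := fun ε => sumDeriv K f + (-(ε * Complex.I)) • f with hh
  have hma (ε : ℝ) : IsMultiaffine (h ε) := (hf.sumDeriv K).add (hf.smul _)
  have hstable (ε : ℝ) (hε : 0 < ε) : IsStable (h ε) := by
    refine .inr fun y hy h0 => ?_
    have hK := IsStable.im_mul_conj_sumDeriv_nonneg (.inr hne) hf hy K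
    have hval : sumDeriv K f y = ε * Complex.I * f y := by
      simpa [hh, add_neg_eq_zero] using h0
    have : 0 < ε * Complex.normSq (f y) := mul_pos hε (Complex.normSq_pos.2 (hne y hy))
    rw [hval] at hK
    simp [Complex.normSq_apply] at hK this
    nlinarith
  have hlim := nonneg_of_forall_pos_of_lt
    (F := fun ε => (h ε z * conj (coordDeriv i (h ε) z)).im) ?_ one_pos fun ε hε _ =>
      (hstable ε hε).im_mul_conj_nonneg (hma ε) hz i
  · simpa [hh] using hlim
  · refine Continuous.continuousAt ?_
    simp only [hh, map_add, map_smul, Pi.add_apply, Pi.smul_apply, smul_eq_mul]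
    fun_prop

theorem continuous_coordDeriv (hc : Continuous f) (i : σ) : Continuous (coordDeriv i f) := by
  unfold coordDeriv
  exact (hc.comp (continuous_id.update i continuous_const)).sub
    (hc.comp (continuous_id.update i continuous_const))

theorem continuous_sumDeriv (hc : Continuous f) (K : Finset σ) : Continuous (sumDeriv K f) := by
  simp only [funext (sumDeriv_apply K f)]
  exact continuous_finsetSum _ fun k _ => continuous_coordDeriv hc k

theorem IsStable.im_mul_conj_sumDeriv_nonneg_of_im_nonneg (hs : IsStable f) (hf : IsMultiaffine f)
    (hc : Continuous f) {z : σ → ℂ} (hz : ∀ i, 0 ≤ (z i).im) (K : Finset σ) :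
    0 ≤ (f z * conj (sumDeriv K f z)).im := by
  have hD := continuous_sumDeriv hc K
  set p : ℝ → σ → ℂ := fun ε i => z i + ε * Complex.I with hp
  have hpc : Continuous p := by fun_prop
  have hlim := nonneg_of_forall_pos_of_lt
    (F := fun ε => (f (p ε) * conj (sumDeriv K f (p ε))).im) (by fun_prop) one_pos fun ε hε _ =>
      hs.im_mul_conj_sumDeriv_nonneg hf
      (fun i => by simpa [hp] using add_pos_of_nonneg_of_pos (hz i) hε) K
  simpa [hp] using hlim

end Stable

section Orthant

variable {σ : Type*} [Finite σ] [DecidableEq σ]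

theorem monotoneOn_Ici_of_update {α β : Type*} [Preorder α] [Preorder β] {Q : (σ → α) → β}
    {x : σ → α} (h : ∀ y, x ≤ y → ∀ i t, y i ≤ t → Q y ≤ Q (Function.update y i t)) :
    MonotoneOn Q (Set.Ici x) := by
  intro a ha b _ hab
  refine (update_induction (z := a) (z' := b) (P := fun y => x ≤ y ∧ y ≤ b ∧ Q a ≤ Q y)
    ⟨ha, hab, le_rfl⟩ ?_).2.2
  rintro y i ⟨hxy, hyb, hQ⟩
  exact ⟨le_update_iff.2 ⟨(hxy i).trans (hyb i), fun j _ => hxy j⟩,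
    update_le_iff.2 ⟨le_rfl, fun j _ => hyb j⟩, hQ.trans (h y hxy i _ (hyb i))⟩

theorem IsMultiaffine.monotoneOn_div {u v : (σ → ℝ) → ℝ} {x : σ → ℝ} (hu : IsMultiaffine u)
    (hv : IsMultiaffine v) (hpos : ∀ y, x ≤ y → 0 < v y)
    (hwr : ∀ y, x ≤ y → ∀ i, 0 ≤ coordDeriv i u y * v y - u y * coordDeriv i v y) :
    MonotoneOn (fun y => u y / v y) (Set.Ici x) := by
  refine monotoneOn_Ici_of_update fun y hy i t ht => ?_
  obtain ⟨s, rfl⟩ : ∃ s, t = y i + s := ⟨t - y i, (add_sub_cancel _ _).symm⟩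
  have hxt : x ≤ Function.update y i (y i + s) :=
    le_update_iff.2 ⟨(hy i).trans ht, fun j _ => hy j⟩
  rw [div_le_div_iff₀ (hpos y hy) (hpos _ hxt), hu.update_add, hv.update_add]
  linear_combination mul_nonneg (nonneg_of_le_add_right ht) (hwr y hy i)

end Orthant

section RealStable

variable {σ : Type*} [DecidableEq σ] {f : (σ → ℂ) → ℂ} {g : (σ → ℝ) → ℝ}

/-- `f` is a continuous, multiaffine and stable function of complex variables which restricts to
`g` at real points. -/
structure StableExtension (f : (σ → ℂ) → ℂ) (g : (σ → ℝ) → ℝ) : Prop where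
  isMultiaffine : IsMultiaffine f
  continuous : Continuous f
  isStable : IsStable f
  map_ofReal : ∀ x : σ → ℝ, f (fun i => x i) = g x

/-- Real stability of a multiaffine function of real variables, witnessed by its complex
extension. -/
def IsRealStable (g : (σ → ℝ) → ℝ) : Prop := ∃ f, StableExtension f g

theorem coordDeriv_ofReal (h : ∀ x : σ → ℝ, f (fun i => x i) = g x) (i : σ) (x : σ → ℝ) :
    coordDeriv i f (fun j => x j) = coordDeriv i g x := by
  have hupd (t : ℝ) : Function.update (fun j => (x j : ℂ)) i t
      = fun j => (Function.update x i t j : ℂ) :=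
    (Function.comp_update Complex.ofReal x i t).symm
  have h₀ := h (Function.update x i 0)
  have h₁ := h (Function.update x i 1)
  rw [← hupd] at h₀ h₁
  rw [coordDeriv_apply, coordDeriv_apply, Complex.ofReal_sub, ← h₀, ← h₁, Complex.ofReal_zero,
    Complex.ofReal_one]

namespace StableExtension

theorem isMultiaffine_real (h : StableExtension f g) : IsMultiaffine g := by
  have hline (z : σ → ℝ) (i : σ) (t : ℝ) : (g (Function.update z i t) : ℂ)
      = f (Function.update (fun j => (z j : ℂ)) i t) := by
    rw [← h.map_ofReal]
    exact congrArg f (Function.comp_update Complex.ofReal z i t)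
  intro z i t
  apply Complex.ofReal_injective
  rw [Complex.ofReal_add, Complex.ofReal_mul, ← coordDeriv_ofReal h.map_ofReal, hline, hline,
    h.isMultiaffine, Complex.ofReal_zero]

protected theorem sumDeriv [Finite σ] (h : StableExtension f g) (K : Finset σ) :
    StableExtension (sumDeriv K f) (sumDeriv K g) where
  isMultiaffine := h.isMultiaffine.sumDeriv K
  continuous := continuous_sumDeriv h.continuous K
  isStable := h.isStable.sumDeriv h.isMultiaffine K
  map_ofReal x := by
    simp only [sumDeriv_apply, coordDeriv_ofReal h.map_ofReal, Complex.ofReal_sum]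

protected theorem smul (h : StableExtension f g) (c : ℝ) :
    StableExtension ((c : ℂ) • f) (c • g) where
  isMultiaffine := h.isMultiaffine.smul _
  continuous := h.continuous.const_smul _
  isStable := by
    rcases eq_or_ne c 0 with rfl | hc
    · exact .inl fun z _ => by simp
    · exact h.isStable.imp (fun h₀ z hz => by simp [h₀ z hz]) fun hne z hz => by
        simp [hne z hz, hc]
  map_ofReal x := by simp [h.map_ofReal]

end StableExtension

namespace IsRealStable

theorem isMultiaffine (hg : IsRealStable g) : IsMultiaffine g :=
  let ⟨_, h⟩ := hg; h.isMultiaffine_real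

protected theorem smul (hg : IsRealStable g) (c : ℝ) : IsRealStable (c • g) :=
  let ⟨_, h⟩ := hg; ⟨_, h.smul c⟩

variable [Finite σ]

protected theorem sumDeriv (hg : IsRealStable g) (K : Finset σ) : IsRealStable (sumDeriv K g) :=
  let ⟨_, h⟩ := hg; ⟨_, h.sumDeriv K⟩

protected theorem coordDeriv (hg : IsRealStable g) (i : σ) : IsRealStable (coordDeriv i g) := by
  rw [← sumDeriv_singleton]
  exact hg.sumDeriv {i}

theorem rayleigh (hg : IsRealStable g) (j : σ) (K : Finset σ) (x : σ → ℝ) :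
    0 ≤ coordDeriv j g x * sumDeriv K g x
      - g x * coordDeriv j (sumDeriv K g) x := by
  obtain ⟨f, hf⟩ := hg
  have hfK := hf.sumDeriv K
  set z : σ → ℂ := Function.update (fun i => x i) j (x j + Complex.I)
  have hz (i : σ) : 0 ≤ (z i).im := by
    rcases eq_or_ne i j with rfl | hij
    · simp [z]
    · simp [z, Function.update_of_ne hij]
  have hpick := hf.isStable.im_mul_conj_sumDeriv_nonneg_of_im_nonneg hf.isMultiaffine
    hf.continuous hz K
  rw [hf.isMultiaffine.update_add, hfK.isMultiaffine.update_add, hf.map_ofReal, hfK.map_ofReal,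
    coordDeriv_ofReal hf.map_ofReal, coordDeriv_ofReal hfK.map_ofReal] at hpick
  simp at hpick
  linarith

theorem antitoneOn_sumDeriv_div (hg : IsRealStable g) {x : σ → ℝ} (hpos : ∀ y, x ≤ y → 0 < g y)
    (K : Finset σ) : AntitoneOn (fun y => sumDeriv K g y / g y) (Set.Ici x) := by
  have hmono := ((hg.sumDeriv K).isMultiaffine.smul (-1)).monotoneOn_div hg.isMultiaffine hpos
    fun y _ j => by
      have := hg.rayleigh j K y
      simp only [map_smul, Pi.smul_apply, smul_eq_mul]
      linarith
  intro a ha b hb hab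
  have := hmono ha hb hab
  simp only [Pi.smul_apply, smul_eq_mul, neg_one_mul, neg_div] at this
  exact neg_le_neg_iff.1 this

theorem pos_of_coordDeriv_pos (hg : IsRealStable g) {x : σ → ℝ} {k : σ}
    (hpos : ∀ y, x ≤ y → 0 < coordDeriv k g y) (hx : 0 < g x) {y : σ → ℝ} (hy : x ≤ y) :
    0 < g y := by
  have hmono := hg.isMultiaffine.monotoneOn_div (hg.coordDeriv k).isMultiaffine hpos
    fun y _ j => by simpa only [sumDeriv_singleton] using hg.rayleigh j {k} y
  have hquot := (div_pos hx (hpos x le_rfl)).trans_le (hmono Set.self_mem_Ici hy hy)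
  exact (div_pos_iff_of_pos_right (hpos y hy)).1 hquot

end IsRealStable

theorem IsMultiaffine.coordDeriv_nonneg (hg : IsMultiaffine g) {x : σ → ℝ}
    (hpos : ∀ y, x ≤ y → 0 < g y) (k : σ) : 0 ≤ coordDeriv k g x := by
  by_contra! hneg
  have ht : 0 ≤ g x / -coordDeriv k g x :=
    div_nonneg (hpos x le_rfl).le (neg_nonneg.2 hneg.le)
  have := hpos (Function.update x k (x k + g x / -coordDeriv k g x))
    (le_update_iff.2 ⟨le_add_of_nonneg_right ht, fun _ _ => le_rfl⟩)
  rw [hg.update_add, div_neg, neg_mul, div_mul_cancel₀ _ hneg.ne, add_neg_cancel] at this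
  exact this.false

theorem IsRealStable.sumDeriv_pos [Finite σ] (hg : IsRealStable g) {x : σ → ℝ}
    (hpos : ∀ y, x ≤ y → 0 < g y) {K : Finset σ} (hK : sumDeriv K g ≠ 0) {y : σ → ℝ}
    (hy : x ≤ y) : 0 < sumDeriv K g y := by
  have hnonneg {w : σ → ℝ} (hw : x ≤ w) : 0 ≤ sumDeriv K g w := by
    rw [sumDeriv_apply]
    exact Finset.sum_nonneg fun k _ =>
      hg.isMultiaffine.coordDeriv_nonneg (fun v hv => hpos v (hw.trans hv)) k
  refine (hnonneg hy).lt_of_ne' fun h₀ => hK ?_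
  refine (hg.sumDeriv K).isMultiaffine.eq_zero_of_forall_ge y fun w hw => ?_
  have hxw := hy.trans hw
  have hanti := hg.antitoneOn_sumDeriv_div hpos K hy hxw hw
  simp only [h₀, zero_div] at hanti
  refine le_antisymm ?_ (hnonneg hxw)
  by_contra! hw₀
  exact hanti.not_gt (div_pos hw₀ (hpos w hxw))

end RealStable

section PickPair

theorem im_eval_mul_conj_derivative_eval_pow_mul (r : ℂ[X]) (w : ℂ) (k : ℕ) (ε : ℝ) :
    (((X - C w) ^ (k + 1) * r).eval (w - ε * Complex.I)
      * conj ((derivative ((X - C w) ^ (k + 1) * r)).eval (w - ε * Complex.I))).im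
      = -((ε ^ k) ^ 2 * ε * (r.eval (w - ε * Complex.I)
        * conj (((k + 1 : ℂ) • r + (X - C w) * derivative r).eval (w - ε * Complex.I))).re) := by
  set D : ℂ[X] := (k + 1 : ℂ) • r + (X - C w) * derivative r with hD
  set z : ℂ := w - ε * Complex.I with hz
  have hzw : z - w = -(ε * Complex.I) := by rw [hz]; ring
  have hderiv : derivative ((X - C w) ^ (k + 1) * r) = (X - C w) ^ k * D := by
    rw [derivative_mul, derivative_X_sub_C_pow, hD, smul_eq_C_mul]
    simp only [Nat.add_sub_cancel, Nat.cast_add, Nat.cast_one, map_add, map_one, map_natCast]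
    ring
  have hnorm : (z - w) ^ k * conj ((z - w) ^ k) = ((ε ^ k) ^ 2 : ℝ) := by
    rw [Complex.mul_conj, hzw, map_pow, Complex.normSq_neg, Complex.normSq_mul,
      Complex.normSq_I, Complex.normSq_ofReal, mul_one, ← pow_two, pow_right_comm]
  calc _ = (((z - w) ^ k * conj ((z - w) ^ k)) * (z - w) * (r.eval z * conj (D.eval z))).im := by
        rw [hderiv]
        simp only [eval_mul, eval_pow, eval_sub, eval_X, eval_C, map_mul, pow_succ]
        ring_nf
    _ = _ := by
        rw [hnorm, hzw, mul_assoc, Complex.im_ofReal_mul, neg_mul, mul_assoc, Complex.neg_im,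
          Complex.im_ofReal_mul, Complex.I_mul_im]
        ring

theorem eval_ne_zero_of_im_mul_conj_derivative_nonneg {p : ℂ[X]} (hp : p ≠ 0)
    (h : ∀ z : ℂ, 0 < z.im → 0 ≤ (p.eval z * conj (p.derivative.eval z)).im) {w : ℂ}
    (hw : 0 < w.im) : p.eval w ≠ 0 := by
  intro hroot
  obtain ⟨r, hpr, hr⟩ := exists_eq_pow_rootMultiplicity_mul_and_not_dvd p hp w
  obtain ⟨k, hk⟩ := Nat.exists_eq_succ_of_ne_zero ((rootMultiplicity_pos hp).2 hroot).ne'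
  rw [hk] at hpr
  -- At `z = w - iε` the hypothesis reads `ε ^ (2k + 1) F(ε) ≥ 0` where `F(0) = -(k + 1)|r(w)|²`.
  have hlim := nonneg_of_forall_pos_of_lt (F := fun ε : ℝ => -((r.eval (w - ε * Complex.I)
      * conj (((k + 1 : ℂ) • r + (X - C w) * derivative r).eval (w - ε * Complex.I))).re))
    (Continuous.continuousAt (by fun_prop)) hw fun ε hε hεw => by
      have hnn := h (w - ε * Complex.I) (by simpa using hεw)
      rw [hpr, im_eval_mul_conj_derivative_eval_pow_mul, ← mul_neg] at hnn
      exact nonneg_of_mul_nonneg_right hnn (by positivity)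
  have hr₀ : 0 < (k + 1) * Complex.normSq (r.eval w) :=
    mul_pos k.cast_add_one_pos (Complex.normSq_pos.2 fun h₀ => hr (dvd_iff_isRoot.2 h₀))
  simp [Complex.normSq_apply] at hlim hr₀
  linarith

/-- Two real polynomials whose quotient `p / q` has nonnegative imaginary part at the points of
the upper half-plane; the condition is stated without division so as to allow common zeros. -/
def IsPickPair (p q : ℝ[X]) : Prop :=
  ∀ z : ℂ, 0 < z.im → 0 ≤ (aeval z p * conj (aeval z q)).im

theorem splits_of_isPickPair_derivative {p : ℝ[X]} (h : IsPickPair p p.derivative) :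
    p.Splits := by
  rcases eq_or_ne p 0 with rfl | hp
  · exact Splits.zero
  have hne (w : ℂ) (hw : 0 < w.im) : aeval w p ≠ 0 := by
    rw [aeval_def, ← eval_map]
    refine eval_ne_zero_of_im_mul_conj_derivative_nonneg (map_ne_zero hp) (fun z hz => ?_) hw
    rw [derivative_map, eval_map, eval_map]
    exact h z hz
  refine Splits.of_splits_map (algebraMap ℝ ℂ) (IsAlgClosed.splits _) fun w hw => ?_
  have hw₀ : aeval w p = 0 := by
    rw [aeval_def, ← eval_map]
    exact (mem_roots'.1 hw).2
  rcases lt_trichotomy w.im 0 with him | him | him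
  · exact absurd (by rw [aeval_conj, hw₀, map_zero]) (hne (conj w) (by simpa using him))
  · exact ⟨w.re, Complex.ext rfl him.symm⟩
  · exact absurd hw₀ (hne w him)

namespace IsPickPair

variable {p q r : ℝ[X]}

theorem of_mul_left {l : ℝ[X]} (hl : ∀ z : ℂ, 0 < z.im → aeval z l ≠ 0)
    (h : IsPickPair (l * p) (l * q)) : IsPickPair p q := by
  intro z hz
  have hz' := h z hz
  rw [map_mul, map_mul, map_mul, mul_mul_mul_comm, Complex.mul_conj, Complex.im_ofReal_mul] at hz'
  exact nonneg_of_mul_nonneg_right hz' (Complex.normSq_pos.2 (hl z hz))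

theorem im_pow_mul_nonneg {a : ℝ} {m : ℕ} (h : IsPickPair ((X - C a) ^ m * r) q) {ω : ℂ}
    (hω : 0 < ω.im) : 0 ≤ (ω ^ m).im * (r.eval a * q.eval a) := by
  set z : ℝ → ℂ := fun ε => a + ε * ω with hz
  have hcr : Continuous fun ε => aeval (z ε) r := r.continuous_aeval.comp (by fun_prop)
  have hcq : Continuous fun ε => aeval (z ε) q := q.continuous_aeval.comp (by fun_prop)
  have hlim := nonneg_of_forall_pos_of_lt
    (F := fun ε => (ω ^ m * (aeval (z ε) r * conj (aeval (z ε) q))).im)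
    (by fun_prop) one_pos fun ε hε _ => by
      have hnn := h (z ε) (by simpa [hz] using mul_pos hε hω)
      have hza : aeval (z ε) ((X - C a) ^ m * r) = (ε ^ m : ℝ) * (ω ^ m * aeval (z ε) r) := by
        simp only [map_mul, map_pow, map_sub, aeval_X, aeval_C, Complex.coe_algebraMap, hz,
          add_sub_cancel_left, mul_pow, Complex.ofReal_pow, mul_assoc]
      rw [hza, mul_assoc, mul_assoc, Complex.im_ofReal_mul] at hnn
      exact nonneg_of_mul_nonneg_right hnn (pow_pos hε m)
  have hz₀ (p : ℝ[X]) : aeval (z 0) p = ((p.eval a : ℝ) : ℂ) := by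
    rw [show z 0 = a by simp [hz]]
    exact (ofReal_eval p a).symm
  rw [hz₀, hz₀] at hlim
  simpa using hlim

theorem eval_mul_eval_nonneg {a : ℝ} (h : IsPickPair ((X - C a) * r) q) :
    0 ≤ r.eval a * q.eval a := by
  rw [← pow_one (X - C a)] at h
  simpa using h.im_pow_mul_nonneg (ω := Complex.I) (by simp)

theorem eval_eq_zero_of_two_le {a : ℝ} {m : ℕ} (h : IsPickPair ((X - C a) ^ m * r) q)
    (hm : 2 ≤ m) (hr : r.eval a ≠ 0) : q.eval a = 0 := by
  have hm' : (2 : ℝ) ≤ m := by exact_mod_cast hm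
  have hθ {c : ℝ} (hc₀ : 0 < c) (hc : c < 2) :
      0 < (Complex.exp ((c * Real.pi / m : ℝ) * Complex.I)).im := by
    rw [Complex.exp_ofReal_mul_I_im]
    refine Real.sin_pos_of_pos_of_lt_pi (by positivity) ?_
    rw [div_lt_iff₀ (by positivity), mul_comm]
    exact mul_lt_mul_of_pos_left (hc.trans_le hm') Real.pi_pos
  have hpow (c : ℝ) : (Complex.exp ((c * Real.pi / m : ℝ) * Complex.I) ^ m).im
      = Real.sin (c * Real.pi) := by
    rw [← Complex.exp_nat_mul, ← Complex.exp_ofReal_mul_I_im]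
    congr 2
    push_cast
    field_simp
  have hpos := h.im_pow_mul_nonneg (hθ (c := 1 / 2) (by norm_num) (by norm_num))
  have hneg := h.im_pow_mul_nonneg (hθ (c := 3 / 2) (by norm_num) (by norm_num))
  have hsin : Real.sin (3 / 2 * Real.pi) = -1 := by
    rw [show 3 / 2 * Real.pi = Real.pi / 2 + Real.pi by ring, Real.sin_add_pi, Real.sin_pi_div_two]
  rw [hpow, one_div_mul_eq_div, Real.sin_pi_div_two] at hpos
  rw [hpow, hsin] at hneg
  exact (mul_eq_zero.1 (by linarith : r.eval a * q.eval a = 0)).resolve_left hr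

end IsPickPair

section PartialFractions

open Lagrange

variable {ι : Type*}

theorem IsPickPair.injOn_of_eval_ne_zero {v : ι → ℝ} {s : Finset ι} {q : ℝ[X]}
    (h : IsPickPair (nodal s v) q) (hq : ∀ i ∈ s, q.eval (v i) ≠ 0) : Set.InjOn v s := by
  classical
  intro i hi j hj hij
  by_contra hne
  have hnodal : nodal s v ≠ 0 := nodal_ne_zero
  obtain ⟨r, hr, hndvd⟩ := exists_eq_pow_rootMultiplicity_mul_and_not_dvd _ hnodal (v i)
  have hmult : 2 ≤ (nodal s v).rootMultiplicity (v i) := by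
    rw [le_rootMultiplicity_iff hnodal, nodal_eq_mul_nodal_erase hi,
      nodal_eq_mul_nodal_erase (Finset.mem_erase.2 ⟨Ne.symm hne, hj⟩), ← hij, ← mul_assoc, pow_two]
    exact dvd_mul_right _ _
  rw [hr] at h
  exact hq i hi (h.eval_eq_zero_of_two_le hmult fun h₀ => hndvd (dvd_iff_isRoot.2 h₀))

variable [DecidableEq ι]

theorem exists_eq_sum_nodal_erase {F : Type*} [Field F] {v : ι → F} {s : Finset ι}
    (hv : Set.InjOn v s) {q : F[X]} (hq : q.natDegree ≤ s.card) :
    ∃ κ, q = C κ * nodal s v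
      + ∑ i ∈ s, C (q.eval (v i) / (nodal (s.erase i) v).eval (v i)) * nodal (s.erase i) v := by
  refine ⟨q.coeff s.card, eq_add_of_sub_eq' ?_⟩
  refine eq_of_degrees_lt_of_eval_index_eq s hv ?_ ?_ fun i hi => ?_
  · rw [degree_lt_iff_coeff_zero]
    intro n hn
    rw [coeff_sub, coeff_C_mul]
    rcases hn.eq_or_lt with rfl | hn
    · have : (nodal s v).coeff s.card = 1 := by
        simpa only [natDegree_nodal] using (nodal_monic (s := s) (v := v)).coeff_natDegree
      rw [this, mul_one, sub_self]
    · rw [coeff_eq_zero_of_natDegree_lt (hq.trans_lt hn),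
        coeff_eq_zero_of_natDegree_lt (natDegree_nodal.trans_lt hn), mul_zero, sub_zero]
  · rw [← mem_degreeLT]
    refine Submodule.sum_mem _ fun i hi => mem_degreeLT.2 ?_
    rw [← smul_eq_C_mul]
    refine (degree_smul_le _ _).trans_lt ?_
    rw [degree_nodal, Nat.cast_lt]
    exact Finset.card_erase_lt_of_mem hi
  · have hne : (nodal (s.erase i) v).eval (v i) ≠ 0 := eval_nodal_not_at_node fun j hj =>
      fun hij => (Finset.mem_erase.1 hj).1 (hv (Finset.mem_of_mem_erase hj) hi hij.symm)
    rw [eval_sub, eval_mul, eval_nodal_at_node hi, mul_zero, sub_zero, eval_finsetSum,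
      Finset.sum_eq_single_of_mem i hi, eval_mul, eval_C, div_mul_cancel₀ _ hne]
    intro j _ hji
    rw [eval_mul, eval_nodal_at_node (Finset.mem_erase.2 ⟨hji.symm, hi⟩), mul_zero]

theorem IsPickPair.exists_eq_add_sum_nodal_erase {v : ι → ℝ} {s : Finset ι} {q : ℝ[X]}
    (h : IsPickPair (nodal s v) q) (hq : q.natDegree ≤ s.card) :
    ∃ κ, ∃ m : ι → ℝ, (∀ i ∈ s, 0 ≤ m i) ∧
      q = C κ * nodal s v + ∑ i ∈ s, C (m i) * nodal (s.erase i) v := by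
  induction s using Finset.strongInduction generalizing q with
  | H s ih =>
  by_cases hroot : ∃ i ∈ s, q.eval (v i) = 0
  · obtain ⟨i, hi, hqi⟩ := hroot
    obtain ⟨q', rfl⟩ := dvd_iff_isRoot.2 hqi
    rw [nodal_eq_mul_nodal_erase hi] at h
    have hX (z : ℂ) (hz : 0 < z.im) : aeval z (X - C (v i)) ≠ 0 := by
      intro h₀
      simpa [hz.ne'] using congrArg Complex.im h₀
    have hq' : q'.natDegree ≤ (s.erase i).card := by
      rcases eq_or_ne q' 0 with rfl | hq₀
      · exact natDegree_zero.trans_le (Nat.zero_le _)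
      · rw [natDegree_mul (X_sub_C_ne_zero _) hq₀, natDegree_X_sub_C,
          ← Finset.card_erase_add_one hi] at hq
        lia
    obtain ⟨κ, m, hm, rfl⟩ := ih _ (Finset.erase_ssubset hi) (h.of_mul_left hX) hq'
    refine ⟨κ, Function.update m i 0, fun j hj => ?_, ?_⟩
    · rcases eq_or_ne j i with rfl | hji
      · rw [Function.update_self]
      · rw [Function.update_of_ne hji]
        exact hm j (Finset.mem_erase.2 ⟨hji, hj⟩)
    · rw [nodal_eq_mul_nodal_erase hi, ← Finset.add_sum_erase _ _ hi, Function.update_self, C_0,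
        zero_mul, zero_add, mul_add, Finset.mul_sum, mul_left_comm]
      refine congrArg _ (Finset.sum_congr rfl fun j hj => ?_)
      have hji := Finset.ne_of_mem_erase hj
      rw [Function.update_of_ne hji,
        nodal_eq_mul_nodal_erase (Finset.mem_erase.2 ⟨hji.symm, hi⟩ : i ∈ s.erase j),
        Finset.erase_right_comm, mul_left_comm]
  · push Not at hroot
    obtain ⟨κ, hκ⟩ := exists_eq_sum_nodal_erase (h.injOn_of_eval_ne_zero hroot) hq
    refine ⟨κ, _, fun i hi => ?_, hκ⟩
    rw [nodal_eq_mul_nodal_erase hi] at h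
    exact div_nonneg_iff.2 (mul_nonneg_iff.1 (mul_comm (eval (v i) q) _ ▸ h.eval_mul_eval_nonneg))

end PartialFractions
end PickPair

section Cubic

open Lagrange

theorem exists_roots_neg_of_splits {P : Cubic ℝ} (ha : 0 < P.a) (hb : 0 ≤ P.b) (hc : 0 ≤ P.c)
    (hd : 0 < P.d) (hP : P.toPoly.Splits) :
    ∃ x y z, x < 0 ∧ y < 0 ∧ z < 0 ∧
      P = ⟨P.a, P.a * -(x + y + z), P.a * (x * y + x * z + y * z), P.a * -(x * y * z)⟩ := by
  obtain ⟨x, y, z, hroots⟩ := (Cubic.splits_iff_roots_eq_three (φ := RingHom.id ℝ) ha.ne').1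
    (hP.map _)
  have hneg {t : ℝ} (ht : t ∈ (Cubic.map (RingHom.id ℝ) P).roots) : t < 0 := by
    rw [Cubic.map_roots, Polynomial.map_id] at ht
    have hroot : P.toPoly.eval t = 0 := (mem_roots'.1 ht).2
    simp only [Cubic.toPoly, eval_add, eval_mul, eval_C, eval_pow, eval_X] at hroot
    by_contra! ht₀
    have : 0 < P.a * t ^ 3 + P.b * t ^ 2 + P.c * t + P.d := by positivity
    exact this.ne' hroot
  refine ⟨x, y, z, hneg (by simp [hroots]), hneg (by simp [hroots]), hneg (by simp [hroots]), ?_⟩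
  exact Cubic.ext rfl (Cubic.b_eq_three_roots ha.ne' hroots)
    (Cubic.c_eq_three_roots ha.ne' hroots) (Cubic.d_eq_three_roots ha.ne' hroots)

theorem IsPickPair.exists_residues {a x y z : ℝ} {Q : Cubic ℝ} (ha : 0 < a)
    (h : IsPickPair (Cubic.toPoly
      ⟨a, a * -(x + y + z), a * (x * y + x * z + y * z), a * -(x * y * z)⟩) Q.toPoly) :
    ∃ κ p q r, 0 ≤ p ∧ 0 ≤ q ∧ 0 ≤ r ∧
      Q = ⟨κ, κ * -(x + y + z) + (p + q + r),
        κ * (x * y + x * z + y * z) - (p * (y + z) + q * (x + z) + r * (x + y)),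
        κ * -(x * y * z) + (p * (y * z) + q * (x * z) + r * (x * y))⟩ := by
  have hnodal : nodal Finset.univ ![x, y, z] = (X - C x) * (X - C y) * (X - C z) :=
    Fin.prod_univ_three _
  have hpick : IsPickPair (nodal Finset.univ ![x, y, z]) Q.toPoly := fun w hw => by
    have hw' := h w hw
    rw [← Cubic.C_mul_prod_X_sub_C_eq, mul_assoc, mul_assoc, ← mul_assoc (X - C x), ← hnodal,
      map_mul, aeval_C, mul_assoc, Complex.coe_algebraMap, Complex.im_ofReal_mul] at hw'
    exact nonneg_of_mul_nonneg_right hw' ha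
  have hdeg : Q.toPoly.natDegree ≤ (Finset.univ : Finset (Fin 3)).card :=
    natDegree_le_iff_coeff_eq_zero.2 fun n hn => Q.coeff_eq_zero hn
  obtain ⟨κ, m, hm, hQ⟩ := hpick.exists_eq_add_sum_nodal_erase hdeg
  refine ⟨κ, m 0, m 1, m 2, hm 0 (Finset.mem_univ _), hm 1 (Finset.mem_univ _),
    hm 2 (Finset.mem_univ _), (Cubic.toPoly_injective _ _).1 ?_⟩
  have h₀ : nodal (Finset.univ.erase 0) ![x, y, z] = (X - C y) * (X - C z) :=
    (congrArg (nodal · _) (by decide : _ = ({1, 2} : Finset (Fin 3)))).trans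
      (Finset.prod_pair (by decide))
  have h₁ : nodal (Finset.univ.erase 1) ![x, y, z] = (X - C x) * (X - C z) :=
    (congrArg (nodal · _) (by decide : _ = ({0, 2} : Finset (Fin 3)))).trans
      (Finset.prod_pair (by decide))
  have h₂ : nodal (Finset.univ.erase 2) ![x, y, z] = (X - C x) * (X - C y) :=
    (congrArg (nodal · _) (by decide : _ = ({0, 1} : Finset (Fin 3)))).trans
      (Finset.prod_pair (by decide))
  rw [hQ, hnodal, Fin.sum_univ_three, h₀, h₁, h₂]
  simp only [Cubic.toPoly, map_add, map_mul, map_sub, map_neg]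
  ring

theorem four_div_le_neg_add {x y z φ : ℝ} (hφ : 0 < φ) (hx : x < 0) (hy : y < 0) (hz : z < 0)
    (h : x * y + x * z + y * z ≤ 3 * φ * -(x * y * z)) : 4 / (3 * φ) ≤ -(x + y) := by
  have hxy : 0 < x * y := mul_pos_of_neg_of_neg hx hy
  have hsum : -(x + y) ≤ 3 * φ * (x * y) := by
    refine le_of_mul_le_mul_right ?_ (neg_pos.2 hz)
    linarith
  have hamgm : 4 * (x * y) ≤ (x + y) ^ 2 := by linarith [sq_nonneg (x - y), add_sq x y, sub_sq x y]
  rw [div_le_iff₀ (by positivity)]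
  refine le_of_mul_le_mul_right ?_ hxy
  calc 4 * (x * y) ≤ -(x + y) * -(x + y) := by linarith
    _ ≤ -(x + y) * (3 * φ * (x * y)) := mul_le_mul_of_nonneg_left hsum (by linarith)
    _ = -(x + y) * (3 * φ) * (x * y) := by ring

section Barrier

variable {P : Cubic ℝ} {φ : ℝ} (hφ : 0 < φ) (ha : 0 < P.a) (hb : 0 ≤ P.b) (hc : 0 ≤ P.c)
  (hd : 0 < P.d) (hP : P.toPoly.Splits) (hbar : P.c ≤ 3 * φ * P.d)

include hφ ha hb hc hd hP hbar

theorem cubic_barrier_pos : 0 < P.b - 4 / (3 * φ) * P.a := by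
  obtain ⟨x, y, z, hx, hy, hz, hroots⟩ := exists_roots_neg_of_splits ha hb hc hd hP
  generalize P.a = a at *
  subst hroots
  have hσ : x * y + x * z + y * z ≤ 3 * φ * -(x * y * z) :=
    le_of_mul_le_mul_left (by linarith) ha
  have hxy := four_div_le_neg_add hφ hx hy hz hσ
  have : 0 < a * (-z + (-(x + y) - 4 / (3 * φ))) := mul_pos ha (by linarith)
  linarith

theorem cubic_barrier_le {Q : Cubic ℝ} (hPQ : IsPickPair P.toPoly Q.toPoly) :
    P.d * (Q.b - 4 / (3 * φ) * Q.a) ≤ Q.d * (P.b - 4 / (3 * φ) * P.a) := by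
  obtain ⟨x, y, z, hx, hy, hz, hroots⟩ := exists_roots_neg_of_splits ha hb hc hd hP
  generalize P.a = a at *
  subst hroots
  obtain ⟨κ, p, q, r, hp, hq, hr, rfl⟩ := hPQ.exists_residues ha
  have hσ : x * y + x * z + y * z ≤ 3 * φ * -(x * y * z) :=
    le_of_mul_le_mul_left (by linarith) ha
  have hyz := sub_nonneg.2 (four_div_le_neg_add hφ hy hz hx (by linarith))
  have hxz := sub_nonneg.2 (four_div_le_neg_add hφ hx hz hy (by linarith))
  have hxy := sub_nonneg.2 (four_div_le_neg_add hφ hx hy hz hσ)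
  have hyz₀ := (mul_pos_of_neg_of_neg hy hz).le
  have hxz₀ := (mul_pos_of_neg_of_neg hx hz).le
  have hxy₀ := (mul_pos_of_neg_of_neg hx hy).le
  have hsum : 0 ≤ a * (p * (y * z * (-(y + z) - 4 / (3 * φ)))
      + q * (x * z * (-(x + z) - 4 / (3 * φ))) + r * (x * y * (-(x + y) - 4 / (3 * φ)))) := by
    positivity
  linear_combination hsum

end Barrier

end Cubic

section DiffOp

variable {σ ι R : Type*} [DecidableEq σ] [DecidableEq ι] [CommRing R]

/-- The commutative ring of operators generated by the partial derivatives `coordDeriv i`. -/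
def DiffOp (σ R : Type*) [DecidableEq σ] [CommRing R] : Type _ :=
  Algebra.adjoin R (Set.range (coordDeriv : σ → Module.End R ((σ → R) → R)))

open scoped IsMulCommutative in
instance : CommRing (DiffOp σ R) :=
  haveI := Algebra.isMulCommutative_adjoin R
    (s := Set.range (coordDeriv : σ → Module.End R ((σ → R) → R))) <| by
      rintro _ ⟨i, rfl⟩ _ ⟨j, rfl⟩
      exact commute_coordDeriv i j
  inferInstanceAs (CommRing (Algebra.adjoin R (Set.range coordDeriv)))

instance : Module (DiffOp σ R) ((σ → R) → R) :=
  inferInstanceAs (Module (Algebra.adjoin R (Set.range coordDeriv)) _)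

variable (R) in
/-- The partial derivative `coordDeriv i` as an element of the ring `DiffOp σ R`. -/
def partialOp (i : σ) : DiffOp σ R := ⟨coordDeriv i, Algebra.subset_adjoin ⟨i, rfl⟩⟩

theorem partialOp_smul (i : σ) (f : (σ → R) → R) : partialOp R i • f = coordDeriv i f := rfl

variable (R) in
theorem partialOp_mul_self (i : σ) : partialOp R i * partialOp R i = 0 :=
  Subtype.ext (coordDeriv_mul_self i)

theorem IsMultiaffine.add_single {f : (σ → R) → R} (hf : IsMultiaffine f) (z : σ → R) (i : σ)
    (t : R) : f (z + Pi.single i t) = f z + t * (partialOp R i • f) z := by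
  rw [partialOp_smul, ← hf.update_add]
  congr 1
  ext j
  rcases eq_or_ne j i with rfl | hj
  · rw [Pi.add_apply, Pi.single_eq_same, Function.update_self]
  · rw [Pi.add_apply, Pi.single_eq_of_ne hj, Function.update_of_ne hj, add_zero]

section Blocks

variable (R)

/-- The first elementary symmetric polynomial of the three partial derivatives in the `i`-th block
of variables, where `ι × Fin 3` consists of one block of three variables for each `i`. -/
def esymm₁ (i : ι) : DiffOp (ι × Fin 3) R :=
  partialOp R (i, 0) + partialOp R (i, 1) + partialOp R (i, 2)

/-- The second elementary symmetric polynomial of the partial derivatives in the `i`-th block. -/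
def esymm₂ (i : ι) : DiffOp (ι × Fin 3) R :=
  partialOp R (i, 0) * partialOp R (i, 1) + partialOp R (i, 0) * partialOp R (i, 2)
    + partialOp R (i, 1) * partialOp R (i, 2)

/-- The third elementary symmetric polynomial of the partial derivatives in the `i`-th block. -/
def esymm₃ (i : ι) : DiffOp (ι × Fin 3) R :=
  partialOp R (i, 0) * partialOp R (i, 1) * partialOp R (i, 2)

/-- The product of the partial derivatives with respect to the variables of the `i`-th block
other than the `k`-th one; the additions `k + 1` and `k + 2` are modulo `3`. -/
def omitOp (i : ι) (k : Fin 3) : DiffOp (ι × Fin 3) R :=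
  partialOp R (i, k + 1) * partialOp R (i, k + 2)

theorem esymm₁_mul_esymm₁ (i : ι) : esymm₁ R i * esymm₁ R i = 2 • esymm₂ R i := by
  simp only [esymm₁, esymm₂]
  linear_combination partialOp_mul_self R (i, (0 : Fin 3))
    + partialOp_mul_self R (i, (1 : Fin 3)) + partialOp_mul_self R (i, (2 : Fin 3))

theorem esymm₁_mul_esymm₂ (i : ι) : esymm₁ R i * esymm₂ R i = 3 • esymm₃ R i := by
  simp only [esymm₁, esymm₂, esymm₃]
  linear_combination
    (partialOp R (i, 1) + partialOp R (i, 2)) * partialOp_mul_self R (i, (0 : Fin 3))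
      + (partialOp R (i, 0) + partialOp R (i, 2)) * partialOp_mul_self R (i, (1 : Fin 3))
      + (partialOp R (i, 0) + partialOp R (i, 1)) * partialOp_mul_self R (i, (2 : Fin 3))

theorem esymm₁_mul_esymm₃ (i : ι) : esymm₁ R i * esymm₃ R i = 0 := by
  simp only [esymm₁, esymm₃]
  linear_combination
    partialOp R (i, 1) * partialOp R (i, 2) * partialOp_mul_self R (i, (0 : Fin 3))
      + partialOp R (i, 0) * partialOp R (i, 2) * partialOp_mul_self R (i, (1 : Fin 3))
      + partialOp R (i, 0) * partialOp R (i, 1) * partialOp_mul_self R (i, (2 : Fin 3))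

theorem esymm₂_mul_esymm₂ (i : ι) : esymm₂ R i * esymm₂ R i = 0 := by
  simp only [esymm₂]
  linear_combination
    (partialOp R (i, 1) + partialOp R (i, 2)) ^ 2 * partialOp_mul_self R (i, (0 : Fin 3))
      + (partialOp R (i, 2) + 2 * partialOp R (i, 0)) * partialOp R (i, 2)
        * partialOp_mul_self R (i, (1 : Fin 3))
      + 2 * partialOp R (i, 0) * partialOp R (i, 1) * partialOp_mul_self R (i, (2 : Fin 3))

theorem esymm₃_mul_esymm₂ (i : ι) : esymm₃ R i * esymm₂ R i = 0 := by
  simp only [esymm₂, esymm₃]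
  linear_combination
    partialOp R (i, 1) * partialOp R (i, 2) * (partialOp R (i, 1) + partialOp R (i, 2))
        * partialOp_mul_self R (i, (0 : Fin 3))
      + partialOp R (i, 0) * partialOp R (i, 2) ^ 2 * partialOp_mul_self R (i, (1 : Fin 3))

theorem partialOp_mul_omitOp (i : ι) (k : Fin 3) :
    partialOp R (i, k) * omitOp R i k = esymm₃ R i := by
  rw [omitOp, esymm₃]
  fin_cases k
  · exact (mul_assoc _ _ _).symm
  · change partialOp R (i, 1) * (partialOp R (i, 2) * partialOp R (i, 0)) = _
    ring
  · change partialOp R (i, 2) * (partialOp R (i, 0) * partialOp R (i, 1)) = _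
    ring

theorem esymm₂_eq_sum_omitOp (i : ι) : esymm₂ R i = ∑ k, omitOp R i k := by
  rw [Fin.sum_univ_three, esymm₂]
  change _ = partialOp R (i, 1) * partialOp R (i, 2) + partialOp R (i, 2) * partialOp R (i, 0)
    + partialOp R (i, 0) * partialOp R (i, 1)
  ring

theorem partialOp_mul_esymm₂ (i : ι) :
    partialOp R (i, 0) * esymm₂ R i = esymm₃ R i := by
  simp only [esymm₂, esymm₃]
  linear_combination
    (partialOp R (i, 1) + partialOp R (i, 2)) * partialOp_mul_self R (i, (0 : Fin 3))

theorem prod_partialOp_mul_prod_esymm₂ (s : Finset ι) :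
    (∏ i ∈ s, partialOp R (i, (0 : Fin 3))) * ∏ i ∈ s, esymm₂ R i = ∏ i ∈ s, esymm₃ R i := by
  simp only [← Finset.prod_mul_distrib, partialOp_mul_esymm₂]

end Blocks

theorem sumDeriv_block (i : ι) (f : (ι × Fin 3 → R) → R) :
    sumDeriv ({i} ×ˢ Finset.univ) f = esymm₁ R i • f := by
  rw [sumDeriv, Finset.sum_product, Finset.sum_singleton, Fin.sum_univ_three]
  rfl

/-- The indicator vector of the `i`-th block of variables. -/
def blockDir (i : ι) : ι × Fin 3 → R := fun p => if p.1 = i then 1 else 0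

theorem blockDir_eq_add_single (i : ι) :
    (blockDir i : ι × Fin 3 → R)
      = Pi.single (i, 0) 1 + Pi.single (i, 1) 1 + Pi.single (i, 2) 1 := by
  ext ⟨j, k⟩
  fin_cases k <;> simp [blockDir, Pi.single_apply]

theorem IsMultiaffine.add_smul_blockDir {f : (ι × Fin 3 → R) → R} (hf : IsMultiaffine f)
    (z : ι × Fin 3 → R) (i : ι) (t : R) :
    f (z + t • blockDir i) = f z + t * (esymm₁ R i • f) z
      + t ^ 2 * (esymm₂ R i • f) z + t ^ 3 * (esymm₃ R i • f) z := by
  have hD {f : (ι × Fin 3 → R) → R} (hf : IsMultiaffine f) (p) :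
      IsMultiaffine (partialOp R p • f) := hf.coordDeriv p
  simp only [blockDir_eq_add_single, smul_add, ← Pi.single_smul, smul_eq_mul, mul_one, ← add_assoc,
    hf.add_single, (hD hf _).add_single, (hD (hD hf _) _).add_single, esymm₁, esymm₂, esymm₃,
    add_smul, mul_smul, Pi.add_apply]
  ring

end DiffOp

section Barrier

variable {ι : Type*} [DecidableEq ι] {g : (ι × Fin 3 → ℝ) → ℝ} {f : (ι × Fin 3 → ℂ) → ℂ}

namespace IsRealStable

variable [Finite ι]

protected theorem partialOp_smul (hg : IsRealStable g) (p : ι × Fin 3) :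
    IsRealStable (partialOp ℝ p • g) := hg.coordDeriv p

protected theorem omitOp_smul (hg : IsRealStable g) (i : ι) (k : Fin 3) :
    IsRealStable (omitOp ℝ i k • g) := by
  rw [omitOp, mul_smul]
  exact (hg.partialOp_smul _).partialOp_smul _

protected theorem esymm₁_smul (hg : IsRealStable g) (i : ι) :
    IsRealStable (esymm₁ ℝ i • g) :=
  sumDeriv_block i g ▸ hg.sumDeriv _

protected theorem esymm₂_smul (hg : IsRealStable g) (i : ι) :
    IsRealStable (esymm₂ ℝ i • g) := by
  convert ((hg.esymm₁_smul i).esymm₁_smul i).smul (1 / 2) using 1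
  rw [smul_smul, esymm₁_mul_esymm₁, smul_assoc, two_smul, smul_add, ← add_smul]
  norm_num

protected theorem prod_esymm₂_smul (hg : IsRealStable g) (s : Finset ι) :
    IsRealStable ((∏ i ∈ s, esymm₂ ℝ i) • g) := by
  induction s using Finset.induction_on with
  | empty => rwa [Finset.prod_empty, one_smul]
  | insert i s hi ih =>
    rw [Finset.prod_insert hi, mul_smul]
    exact ih.esymm₂_smul i

variable {i : ι} {z : ι × Fin 3 → ℝ}

theorem esymm₁_smul_pos (hg : IsRealStable g) (hpos : ∀ y, z ≤ y → 0 < g y)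
    (hne : esymm₁ ℝ i • g ≠ 0) {y : ι × Fin 3 → ℝ} (hy : z ≤ y) :
    0 < (esymm₁ ℝ i • g) y := by
  rw [← sumDeriv_block] at hne ⊢
  exact hg.sumDeriv_pos hpos hne hy

theorem esymm_smul_pos (hg : IsRealStable g) (hpos : ∀ y, z ≤ y → 0 < g y)
    (hne : esymm₃ ℝ i • g ≠ 0) {y : ι × Fin 3 → ℝ} (hy : z ≤ y) :
    0 < (esymm₁ ℝ i • g) y ∧ 0 < (esymm₂ ℝ i • g) y
      ∧ 0 < (esymm₃ ℝ i • g) y := by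
  have h₁₁ : esymm₁ ℝ i • esymm₁ ℝ i • g = 2 • esymm₂ ℝ i • g := by
    rw [smul_smul, esymm₁_mul_esymm₁, smul_assoc]
  have h₁₂ : esymm₁ ℝ i • esymm₂ ℝ i • g = 3 • esymm₃ ℝ i • g := by
    rw [smul_smul, esymm₁_mul_esymm₂, smul_assoc]
  have hne₂ : esymm₁ ℝ i • esymm₂ ℝ i • g ≠ 0 := by
    rw [h₁₂]
    exact smul_ne_zero three_ne_zero hne
  have hne₁ : esymm₁ ℝ i • esymm₁ ℝ i • g ≠ 0 := fun h₀ => hne₂ <| by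
    rw [h₁₁] at h₀
    rw [(smul_eq_zero.1 h₀).resolve_left two_ne_zero, smul_zero]
  have hpos₁ (y) (hy : z ≤ y) : 0 < (esymm₁ ℝ i • g) y :=
    hg.esymm₁_smul_pos hpos (fun h₀ => hne₁ (by rw [h₀, smul_zero])) hy
  have hpos₂ (y) (hy : z ≤ y) : 0 < (esymm₂ ℝ i • g) y := by
    have h := (hg.esymm₁_smul i).esymm₁_smul_pos hpos₁ hne₁ hy
    rw [h₁₁, Pi.smul_apply] at h
    exact pos_of_smul_pos_left h (Nat.zero_le _)
  have hpos₃ := (hg.esymm₂_smul i).esymm₁_smul_pos hpos₂ hne₂ hy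
  rw [h₁₂, Pi.smul_apply] at hpos₃
  exact ⟨hpos₁ y hy, hpos₂ y hy, pos_of_smul_pos_left hpos₃ (Nat.zero_le _)⟩

end IsRealStable

/-- The cubic polynomial `t ↦ g (z + t • blockDir i)`. -/
def cubicAlong (g : (ι × Fin 3 → ℝ) → ℝ) (i : ι) (z : ι × Fin 3 → ℝ) : Cubic ℝ :=
  ⟨(esymm₃ ℝ i • g) z, (esymm₂ ℝ i • g) z, (esymm₁ ℝ i • g) z, g z⟩

theorem StableExtension.aeval_cubicAlong (h : StableExtension f g) (i : ι) (z : ι × Fin 3 → ℝ)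
    (w : ℂ) :
    aeval w (cubicAlong g i z).toPoly = f ((fun p => (z p : ℂ)) + w • blockDir i) := by
  have hD {f : (ι × Fin 3 → ℂ) → ℂ} {g : (ι × Fin 3 → ℝ) → ℝ}
      (h : ∀ x : ι × Fin 3 → ℝ, f (fun p => x p) = g x) (p : ι × Fin 3) (x : ι × Fin 3 → ℝ) :
      (partialOp ℂ p • f) (fun p => x p) = ((partialOp ℝ p • g) x : ℝ) :=
    coordDeriv_ofReal h p x
  rw [h.isMultiaffine.add_smul_blockDir]
  simp only [esymm₁, esymm₂, esymm₃, add_smul, mul_smul, Pi.add_apply, hD h.map_ofReal,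
    hD (hD h.map_ofReal _), hD (hD (hD h.map_ofReal _) _), h.map_ofReal, cubicAlong, Cubic.toPoly,
    map_add, map_mul, map_pow, aeval_X, aeval_C, Complex.coe_algebraMap]
  ring

theorem toPoly_cubicAlong_esymm₁_smul (g : (ι × Fin 3 → ℝ) → ℝ) (i : ι) (z : ι × Fin 3 → ℝ) :
    (cubicAlong (esymm₁ ℝ i • g) i z).toPoly = derivative (cubicAlong g i z).toPoly := by
  have h₁₁ : esymm₁ ℝ i • esymm₁ ℝ i • g = 2 • esymm₂ ℝ i • g := by
    rw [smul_smul, esymm₁_mul_esymm₁, smul_assoc]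
  have h₂₁ : esymm₂ ℝ i • esymm₁ ℝ i • g = 3 • esymm₃ ℝ i • g := by
    rw [smul_smul, mul_comm, esymm₁_mul_esymm₂, smul_assoc]
  have h₃₁ : esymm₃ ℝ i • esymm₁ ℝ i • g = 0 := by
    rw [smul_smul, mul_comm, esymm₁_mul_esymm₃, zero_smul]
  simp only [cubicAlong, Cubic.toPoly, h₁₁, h₂₁, h₃₁, Pi.smul_apply, Pi.zero_apply, nsmul_eq_mul,
    derivative_add, derivative_C_mul_X_pow, derivative_C_mul_X, derivative_C, map_mul, map_natCast]
  simp only [C_0, Nat.cast_ofNat]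
  ring

namespace IsRealStable

theorem isPickPair_cubicAlong_sumDeriv [Finite ι] (hg : IsRealStable g) (i : ι)
    (K : Finset (ι × Fin 3)) (z : ι × Fin 3 → ℝ) :
    IsPickPair (cubicAlong g i z).toPoly (cubicAlong (sumDeriv K g) i z).toPoly := by
  obtain ⟨f, hf⟩ := hg
  intro w hw
  rw [hf.aeval_cubicAlong, (hf.sumDeriv K).aeval_cubicAlong]
  refine hf.isStable.im_mul_conj_sumDeriv_nonneg_of_im_nonneg hf.isMultiaffine hf.continuous
    (fun p => ?_) K
  simp only [blockDir, Pi.add_apply, Pi.smul_apply, smul_eq_mul, mul_ite, mul_one, mul_zero,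
    Complex.add_im, Complex.ofReal_im, zero_add]
  split_ifs
  exacts [hw.le, le_rfl]

theorem splits_cubicAlong [Finite ι] (hg : IsRealStable g) (i : ι) (z : ι × Fin 3 → ℝ) :
    (cubicAlong g i z).toPoly.Splits := by
  refine splits_of_isPickPair_derivative ?_
  rw [← toPoly_cubicAlong_esymm₁_smul, ← sumDeriv_block]
  exact hg.isPickPair_cubicAlong_sumDeriv i _ z

variable [Finite ι] {i : ι} {z : ι × Fin 3 → ℝ} {φ : ℝ}

theorem esymm₂_smul_sub_smul_blockDir (hg : IsRealStable g) (hφ : 0 < φ) :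
    (esymm₂ ℝ i • g) (z - (4 / (9 * φ)) • blockDir i)
      = (esymm₂ ℝ i • g) z - 4 / (3 * φ) * (esymm₃ ℝ i • g) z := by
  rw [sub_eq_add_neg, ← neg_smul, (hg.esymm₂_smul i).isMultiaffine.add_smul_blockDir, smul_smul,
    smul_smul, smul_smul, esymm₁_mul_esymm₂, esymm₂_mul_esymm₂, esymm₃_mul_esymm₂,
    zero_smul, Pi.zero_apply, smul_assoc, Pi.smul_apply, nsmul_eq_mul]
  field_simp
  ring

end IsRealStable

/-- The point `z` lies above the zeros of `g`, and there the logarithmic derivatives of `g` in all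
coordinate directions are at most `φ`. -/
structure HasBarrier (g : (ι × Fin 3 → ℝ) → ℝ) (z : ι × Fin 3 → ℝ) (φ : ℝ) : Prop where
  pos : ∀ y, z ≤ y → 0 < g y
  le : ∀ p : ι × Fin 3, (partialOp ℝ p • g) z ≤ φ * g z

namespace HasBarrier

variable {i : ι} {z : ι × Fin 3 → ℝ} {φ : ℝ}

theorem esymm₁_smul_le (h : HasBarrier g z φ) : (esymm₁ ℝ i • g) z ≤ 3 * φ * g z := by
  simp only [esymm₁, add_smul, Pi.add_apply]
  linarith [h.le (i, 0), h.le (i, 1), h.le (i, 2)]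

variable [Finite ι]

theorem esymm₂_smul_pos (h : HasBarrier g z φ) (hg : IsRealStable g) (hφ : 0 < φ)
    (hne : esymm₃ ℝ i • g ≠ 0) {y : ι × Fin 3 → ℝ} (hy : z - (4 / (9 * φ)) • blockDir i ≤ y) :
    0 < (esymm₂ ℝ i • g) y := by
  obtain ⟨w, hw, rfl⟩ : ∃ w, z ≤ w ∧ y = w - (4 / (9 * φ)) • blockDir i :=
    ⟨_, sub_le_iff_le_add.1 hy, (add_sub_cancel_right _ _).symm⟩
  obtain ⟨h₁, h₂, h₃⟩ := hg.esymm_smul_pos h.pos hne hw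
  have hbar : (esymm₁ ℝ i • g) w ≤ 3 * φ * g w := by
    have hanti := hg.antitoneOn_sumDeriv_div h.pos ({i} ×ˢ Finset.univ) Set.self_mem_Ici hw hw
    simp only [sumDeriv_block] at hanti
    exact (div_le_iff₀ (h.pos w hw)).1
      (hanti.trans ((div_le_iff₀ (h.pos z le_rfl)).2 h.esymm₁_smul_le))
  rw [hg.esymm₂_smul_sub_smul_blockDir hφ]
  exact cubic_barrier_pos (P := cubicAlong g i w) hφ h₃ h₂.le h₁.le (h.pos w hw)
    (hg.splits_cubicAlong i w) hbar

protected theorem esymm₂_smul (h : HasBarrier g z φ) (hg : IsRealStable g) (hφ : 0 < φ)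
    (hne : esymm₃ ℝ i • g ≠ 0) :
    HasBarrier (esymm₂ ℝ i • g) (z - (4 / (9 * φ)) • blockDir i) φ where
  pos _ hy := h.esymm₂_smul_pos hg hφ hne hy
  le p := by
    have hz := h.pos z le_rfl
    obtain ⟨h₁, h₂, h₃⟩ := hg.esymm_smul_pos h.pos hne le_rfl
    have hpick := hg.isPickPair_cubicAlong_sumDeriv i {p} z
    rw [sumDeriv_singleton, ← partialOp_smul] at hpick
    have hle := cubic_barrier_le (P := cubicAlong g i z) hφ h₃ h₂.le h₁.le hz
      (hg.splits_cubicAlong i z) h.esymm₁_smul_le hpick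
    have hpos := h.esymm₂_smul_pos hg hφ hne le_rfl
    rw [hg.esymm₂_smul_sub_smul_blockDir hφ] at hpos ⊢
    rw [smul_comm, (hg.partialOp_smul p).esymm₂_smul_sub_smul_blockDir hφ]
    refine le_of_mul_le_mul_left (hle.trans ?_) hz
    calc (partialOp ℝ p • g) z * ((esymm₂ ℝ i • g) z - 4 / (3 * φ) * (esymm₃ ℝ i • g) z)
        ≤ φ * g z * ((esymm₂ ℝ i • g) z - 4 / (3 * φ) * (esymm₃ ℝ i • g) z) :=
          mul_le_mul_of_nonneg_right (h.le p) hpos.le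
      _ = g z * (φ * ((esymm₂ ℝ i • g) z - 4 / (3 * φ) * (esymm₃ ℝ i • g) z)) := by ring

protected theorem prod_esymm₂_smul (h : HasBarrier g z φ) (hg : IsRealStable g) (hφ : 0 < φ)
    {s : Finset ι} (hne : (∏ i ∈ s, esymm₃ ℝ i) • g ≠ 0) :
    HasBarrier ((∏ i ∈ s, esymm₂ ℝ i) • g) (z - (4 / (9 * φ)) • ∑ i ∈ s, blockDir i) φ := by
  induction s using Finset.induction_on with
  | empty => simpa only [Finset.prod_empty, one_smul, Finset.sum_empty, smul_zero, sub_zero] using h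
  | insert i s hi ih =>
    rw [Finset.prod_insert hi] at hne
    have hne' : esymm₃ ℝ i • (∏ j ∈ s, esymm₂ ℝ j) • g ≠ 0 := fun h₀ => hne <| by
      rw [← prod_partialOp_mul_prod_esymm₂, mul_left_comm, mul_smul, mul_smul, h₀, smul_zero]
    rw [Finset.prod_insert hi, Finset.sum_insert hi, mul_smul, add_comm, smul_add, ← sub_sub]
    refine (ih fun h₀ => hne ?_).esymm₂_smul (hg.prod_esymm₂_smul s) hφ hne'
    rw [mul_smul, h₀, smul_zero]

end HasBarrier

theorem IsRealStable.exists_prod_omitOp_smul_pos [Finite ι] (hg : IsRealStable g)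
    {x : ι × Fin 3 → ℝ} {s : Finset ι} (hne : (∏ i ∈ s, esymm₃ ℝ i) • g ≠ 0)
    (hpos : ∀ y, x ≤ y → 0 < ((∏ i ∈ s, esymm₂ ℝ i) • g) y) :
    ∃ c : ι → Fin 3, ∀ y, x ≤ y → 0 < ((∏ i ∈ s, omitOp ℝ i (c i)) • g) y := by
  induction s using Finset.induction_on generalizing g with
  | empty => exact ⟨0, by simpa only [Finset.prod_empty] using hpos⟩
  | insert i s hi ih =>
    rw [Finset.prod_insert hi] at hne
    obtain ⟨k, hk⟩ : ∃ k, 0 < ((∏ j ∈ s, esymm₂ ℝ j) • omitOp ℝ i k • g) x := by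
      have hx := hpos x le_rfl
      rw [Finset.prod_insert hi, mul_comm, esymm₂_eq_sum_omitOp, Finset.mul_sum, Finset.sum_smul,
        Finset.sum_apply] at hx
      by_contra! hle
      exact hx.not_ge (Finset.sum_nonpos fun k _ => by simpa only [mul_smul] using hle k)
    have hD (y) (hy : x ≤ y) :
        0 < (partialOp ℝ (i, (0 : Fin 3)) • (∏ j ∈ insert i s, esymm₂ ℝ j) • g) y := by
      rw [partialOp_smul, ← sumDeriv_singleton]
      refine (hg.prod_esymm₂_smul _).sumDeriv_pos hpos (fun h₀ => hne ?_) hy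
      rw [sumDeriv_singleton, ← partialOp_smul, Finset.prod_insert hi, smul_smul, ← mul_assoc,
        partialOp_mul_esymm₂] at h₀
      rw [← prod_partialOp_mul_prod_esymm₂, mul_left_comm, mul_smul, h₀, smul_zero]
    have hswap : partialOp ℝ (i, (0 : Fin 3)) • (∏ j ∈ insert i s, esymm₂ ℝ j) • g
        = partialOp ℝ (i, k) • (∏ j ∈ s, esymm₂ ℝ j) • omitOp ℝ i k • g := by
      rw [Finset.prod_insert hi, smul_smul, ← mul_assoc, partialOp_mul_esymm₂,
        ← partialOp_mul_omitOp ℝ i k, smul_smul, smul_smul]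
      congr 1
      ring
    have hkpos (y) (hy : x ≤ y) : 0 < ((∏ j ∈ s, esymm₂ ℝ j) • omitOp ℝ i k • g) y :=
      ((hg.omitOp_smul i k).prod_esymm₂_smul s).pos_of_coordDeriv_pos (hswap ▸ hD) hk hy
    have hkne : (∏ j ∈ s, esymm₃ ℝ j) • omitOp ℝ i k • g ≠ 0 := fun h₀ => hne <| by
      rw [← partialOp_mul_omitOp ℝ i k, mul_assoc, mul_comm (omitOp ℝ i k), mul_smul, mul_smul,
        h₀, smul_zero]
    obtain ⟨c, hc⟩ := ih (hg.omitOp_smul i k) hkne hkpos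
    refine ⟨Function.update c i k, ?_⟩
    have hprod : ∏ j ∈ s, omitOp ℝ j (Function.update c i k j) = ∏ j ∈ s, omitOp ℝ j (c j) :=
      Finset.prod_congr rfl fun j hj => by
        rw [Function.update_of_ne (ne_of_mem_of_not_mem hj hi)]
    rwa [Finset.prod_insert hi, Function.update_self, hprod, mul_comm, mul_smul]

end Barrier

section Pencil

variable {σ R : Type*} [DecidableEq σ] [CommRing R]

section Positivity

variable {A : Matrix σ σ ℂ}

theorem isHermitian_diagonal_ofReal_sub (hA : A.IsHermitian) (x : σ → ℝ) :
    (diagonal (fun i => (x i : ℂ)) - A).IsHermitian :=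
  (isHermitian_diagonal_of_self_adjoint _ (funext fun i => Complex.conj_ofReal (x i))).sub hA

theorem posDef_diagonal_sub (hA : (1 - A).PosSemidef) {x : σ → ℝ} (hx : ∀ i, 1 < x i) :
    (diagonal (fun i => (x i : ℂ)) - A).PosDef := by
  have hdiag : (diagonal fun i => ((x i - 1 : ℝ) : ℂ)).PosDef :=
    PosDef.diagonal fun i => Complex.zero_lt_real.2 (sub_pos.2 (hx i))
  convert hdiag.add_posSemidef hA using 1
  rw [← add_sub_assoc, ← diagonal_one, diagonal_add]
  simp only [Complex.ofReal_sub, Complex.ofReal_one, sub_add_cancel]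

end Positivity

/-- The matrix `diagonal x - A` with its rows indexed by `S` replaced by rows of the identity; its
determinant is the principal minor of `diagonal x - A` on the complement of `S`. -/
def rowPencil (A : Matrix σ σ R) (S : Finset σ) (x : σ → R) : Matrix σ σ R :=
  of fun i j => if i ∈ S then (1 : Matrix σ σ R) i j else (diagonal x - A) i j

theorem rowPencil_empty (A : Matrix σ σ R) (x : σ → R) : rowPencil A ∅ x = diagonal x - A := by
  ext i j
  rw [rowPencil, of_apply, if_neg (Finset.notMem_empty i)]

theorem rowPencil_insert (A : Matrix σ σ R) (S : Finset σ) (x : σ → R) (i : σ) :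
    rowPencil A (insert i S) x = (rowPencil A S x).updateRow i (Pi.single i 1) := by
  ext j k
  rcases eq_or_ne j i with rfl | hj
  · rw [updateRow_self, rowPencil, of_apply, if_pos (Finset.mem_insert_self j S),
      one_eq_pi_single]
  · simp only [updateRow_ne hj, rowPencil, of_apply, Finset.mem_insert, hj, false_or]

theorem rowPencil_update {i : σ} {S : Finset σ} (hi : i ∉ S) (A : Matrix σ σ R) (x : σ → R)
    (t : R) : rowPencil A S (Function.update x i t)
      = (rowPencil A S x).updateRow i (t • Pi.single i 1 + -A.row i) := by
  ext j k
  rcases eq_or_ne j i with rfl | hj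
  · rw [updateRow_self, rowPencil, of_apply, if_neg hi, Matrix.sub_apply, Pi.add_apply,
      Pi.smul_apply, ← one_eq_pi_single, Pi.neg_apply, row_apply, ← sub_eq_add_neg,
      diagonal_apply, Function.update_self, one_apply, smul_ite, smul_zero, smul_eq_mul, mul_one]
  · simp only [updateRow_ne hj, rowPencil, of_apply, Matrix.sub_apply, diagonal_apply,
      Function.update_of_ne hj]

variable [Fintype σ]

theorem rowPencil_mulVec (A : Matrix σ σ R) (S : Finset σ) (x w : σ → R) (i : σ) :
    (rowPencil A S x *ᵥ w) i = if i ∈ S then w i else x i * w i - (A *ᵥ w) i := by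
  split_ifs with hi
  · simp only [rowPencil, mulVec, dotProduct, of_apply, hi, if_true, one_apply, ite_mul, one_mul,
      zero_mul, Finset.sum_ite_eq, Finset.mem_univ]
  · rw [← mulVec_diagonal, ← Pi.sub_apply, ← sub_mulVec]
    simp only [rowPencil, mulVec, dotProduct, of_apply, hi, if_false]

/-- The determinant of `rowPencil A S x` as a function of `x`. -/
def pencilDet (A : Matrix σ σ R) (S : Finset σ) (x : σ → R) : R := (rowPencil A S x).det

theorem pencilDet_univ (A : Matrix σ σ R) (x : σ → R) : pencilDet A Finset.univ x = 1 := by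
  have h : rowPencil A Finset.univ x = 1 := by
    ext i j
    rw [rowPencil, of_apply, if_pos (Finset.mem_univ i)]
  rw [pencilDet, h, det_one]

theorem pencilDet_update {i : σ} {S : Finset σ} (hi : i ∉ S) (A : Matrix σ σ R) (x : σ → R)
    (t : R) : pencilDet A S (Function.update x i t)
      = pencilDet A S (Function.update x i 0) + t * pencilDet A (insert i S) x := by
  simp only [pencilDet, rowPencil_update hi, rowPencil_insert, det_updateRow_add,
    det_updateRow_smul]
  ring

theorem coordDeriv_pencilDet {i : σ} {S : Finset σ} (hi : i ∉ S) (A : Matrix σ σ R) :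
    coordDeriv i (pencilDet A S) = pencilDet A (insert i S) := by
  funext x
  rw [coordDeriv_apply, pencilDet_update hi A x 1]
  ring

theorem isMultiaffine_pencilDet (A : Matrix σ σ R) : IsMultiaffine (pencilDet A ∅) :=
  fun x i t => by
    rw [coordDeriv_pencilDet (Finset.notMem_empty i), pencilDet_update (Finset.notMem_empty i)]

theorem pencilDet_singleton (A : Matrix σ σ R) (x : σ → R) (i : σ)
    (hu : IsUnit (diagonal x - A)) :
    pencilDet A {i} x = (diagonal x - A)⁻¹ i i * pencilDet A ∅ x := by
  rw [← insert_empty_eq, pencilDet, pencilDet, rowPencil_insert, rowPencil_empty,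
    ← adjugate_apply, inv_def, Matrix.smul_apply, smul_eq_mul, mul_right_comm,
    Ring.inverse_mul_cancel _ ((isUnit_iff_isUnit_det _).1 hu), one_mul]

theorem continuous_pencilDet (A : Matrix σ σ ℂ) : Continuous (pencilDet A ∅) := by
  have hdet : Continuous fun x => (diagonal x - A).det := Continuous.matrix_det (by fun_prop)
  simp only [← rowPencil_empty] at hdet
  exact hdet

variable {A : Matrix σ σ ℂ}

theorem isStable_pencilDet (hA : A.IsHermitian) : IsStable (pencilDet A ∅) := by
  refine .inr fun x hx h => ?_
  rw [pencilDet, rowPencil_empty] at h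
  obtain ⟨v, hv, hv₀⟩ := exists_mulVec_eq_zero_iff.2 h
  have hA_im : (star v ⬝ᵥ A *ᵥ v).im = 0 := hA.im_star_dotProduct_mulVec_self v
  have hdiag : (star v ⬝ᵥ diagonal x *ᵥ v).im = ∑ i, (x i).im * Complex.normSq (v i) := by
    rw [dotProduct, Complex.im_sum]
    refine Finset.sum_congr rfl fun i _ => ?_
    rw [mulVec_diagonal, Pi.star_apply, mul_left_comm, Complex.star_def,
      ← Complex.normSq_eq_conj_mul_self, Complex.im_mul_ofReal]
  have hzero : ∑ i, (x i).im * Complex.normSq (v i) = 0 := by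
    have him := congrArg (fun w => (star v ⬝ᵥ w).im) hv₀
    rwa [sub_mulVec, dotProduct_sub, Complex.sub_im, hdiag, hA_im, sub_zero, dotProduct_zero,
      Complex.zero_im] at him
  obtain ⟨i, hi⟩ := Function.ne_iff.1 hv
  refine (Finset.sum_pos' (fun j _ => ?_) ⟨i, Finset.mem_univ i, ?_⟩).ne' hzero
  · exact mul_nonneg (hx j).le (Complex.normSq_nonneg _)
  · exact mul_pos (hx i) (Complex.normSq_pos.2 hi)

/-- The real part of `pencilDet A S` as a function of real variables. -/
def realPencilDet (A : Matrix σ σ ℂ) (S : Finset σ) (x : σ → ℝ) : ℝ :=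
  (pencilDet A S fun i => x i).re

theorem pencilDet_ofReal (hA : A.IsHermitian) (x : σ → ℝ) :
    pencilDet A ∅ (fun i => (x i : ℂ)) = (realPencilDet A ∅ x : ℂ) := by
  refine (Complex.conj_eq_iff_re.1 ?_).symm
  rw [pencilDet, rowPencil_empty, starRingEnd_apply, ← det_conjTranspose,
    (isHermitian_diagonal_ofReal_sub hA x).eq]

theorem isRealStable_realPencilDet (hA : A.IsHermitian) : IsRealStable (realPencilDet A ∅) :=
  ⟨pencilDet A ∅, isMultiaffine_pencilDet A, continuous_pencilDet A, isStable_pencilDet hA,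
    pencilDet_ofReal hA⟩

theorem partialOp_smul_realPencilDet {p : σ} {S : Finset σ} (hp : p ∉ S) (A : Matrix σ σ ℂ) :
    partialOp ℝ p • realPencilDet A S = realPencilDet A (insert p S) := by
  funext x
  have hupd (t : ℝ) : (fun j => ((Function.update x p t j : ℝ) : ℂ))
      = Function.update (fun j => (x j : ℂ)) p t := Function.comp_update Complex.ofReal x p t
  rw [partialOp_smul, coordDeriv_apply, realPencilDet, realPencilDet, realPencilDet, hupd, hupd,
    ← Complex.sub_re, Complex.ofReal_one, Complex.ofReal_zero, ← coordDeriv_pencilDet hp,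
    coordDeriv_apply]

theorem prod_partialOp_smul_realPencilDet (A : Matrix σ σ ℂ) (T : Finset σ) :
    (∏ p ∈ T, partialOp ℝ p) • realPencilDet A ∅ = realPencilDet A T := by
  induction T using Finset.induction_on with
  | empty => rw [Finset.prod_empty, one_smul]
  | insert p T hp ih =>
    rw [Finset.prod_insert hp, mul_smul, ih, partialOp_smul_realPencilDet hp]

theorem realPencilDet_pos (hA : (1 - A).PosSemidef) {x : σ → ℝ} (hx : ∀ i, 1 < x i) :
    0 < realPencilDet A ∅ x := by
  rw [realPencilDet, pencilDet, rowPencil_empty]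
  exact (Complex.pos_iff.1 (posDef_diagonal_sub hA hx).det_pos).1

end Pencil

section Resolvent

variable {σ : Type*} [Fintype σ] [DecidableEq σ] {A : Matrix σ σ ℂ}

theorem posSemidef_one_sub_mul_mul_one_sub (hA : A.PosSemidef) (hA1 : (1 - A).PosSemidef) :
    ((1 - A) * A * (1 - A)).PosSemidef := by
  have h := hA.conjTranspose_mul_mul_same (1 - A)
  rwa [hA1.isHermitian.eq] at h

theorem posSemidef_mul_one_sub (hA : A.PosSemidef) (hA1 : (1 - A).PosSemidef) :
    (A * (1 - A)).PosSemidef := by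
  have h : (A * (1 - A) * A).PosSemidef := by
    have h := hA1.conjTranspose_mul_mul_same A
    rwa [hA.isHermitian.eq] at h
  convert h.add (posSemidef_one_sub_mul_mul_one_sub hA hA1) using 1
  noncomm_ring

theorem posSemidef_add_sub_smul_resolvent (hA : A.PosSemidef) (hA1 : (1 - A).PosSemidef) {b : ℝ}
    (hb : 1 < b) : (((b : ℂ) - 1) • (1 : Matrix σ σ ℂ) + A
      - ((b : ℂ) * (b - 1)) • (diagonal (fun _ => (b : ℂ)) - A)⁻¹).PosSemidef := by
  have hM := posDef_diagonal_sub hA1 (x := fun _ => b) fun _ => hb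
  rw [← smul_one_eq_diagonal] at hM ⊢
  set M := (b : ℂ) • (1 : Matrix σ σ ℂ) - A with hMdef
  have hu : IsUnit M.det := (isUnit_iff_isUnit_det M).1 hM.isUnit
  have hpsd : (A * (1 - A) * M).PosSemidef := by
    have hb₀ : 0 ≤ (b : ℂ) - 1 := by exact_mod_cast sub_nonneg.2 hb.le
    convert ((posSemidef_mul_one_sub hA hA1).smul hb₀).add
      (posSemidef_one_sub_mul_mul_one_sub hA hA1) using 1
    simp only [hMdef, sub_mul, mul_sub, mul_smul_comm, mul_one, one_mul, Matrix.mul_assoc]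
    module
  have hfactor : A * (1 - A)
      = M * (((b : ℂ) - 1) • (1 : Matrix σ σ ℂ) + A) - ((b : ℂ) * (b - 1)) • 1 := by
    simp only [hMdef, sub_mul, mul_sub, mul_add, smul_mul_assoc, mul_smul_comm, mul_one, one_mul]
    module
  convert hpsd.conjTranspose_mul_mul_same M⁻¹ using 1
  rw [hM.inv.isHermitian.eq, ← Matrix.mul_assoc, mul_nonsing_inv_cancel_right _ _ hu, hfactor,
    Matrix.mul_sub, nonsing_inv_mul_cancel_left _ _ hu, mul_smul_comm, mul_one]

theorem re_resolvent_diag_le (hA : A.PosSemidef) (hA1 : (1 - A).PosSemidef) {b δ : ℝ}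
    (hb : 1 < b) {i : σ} (hi : (A i i).re ≤ δ) :
    ((diagonal (fun _ => (b : ℂ)) - A : Matrix σ σ ℂ)⁻¹ i i).re ≤ (b - 1 + δ) / (b * (b - 1)) := by
  have hpsd := posSemidef_add_sub_smul_resolvent hA hA1 hb
  have h := (Complex.nonneg_iff.1 (hpsd.diag_nonneg (i := i))).1
  rw [← Complex.ofReal_one, ← Complex.ofReal_sub, ← Complex.ofReal_mul, Matrix.sub_apply,
    Matrix.add_apply, Matrix.smul_apply, Matrix.smul_apply, one_apply_eq, smul_eq_mul, mul_one,
    smul_eq_mul, Complex.sub_re, Complex.add_re, Complex.ofReal_re, Complex.re_ofReal_mul] at h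
  rw [le_div_iff₀ (mul_pos (by linarith) (by linarith))]
  linarith

theorem partialOp_smul_realPencilDet_le (hA : A.PosSemidef) (hA1 : (1 - A).PosSemidef) {b δ : ℝ}
    (hb : 1 < b) {i : σ} (hi : (A i i).re ≤ δ) :
    (partialOp ℝ i • realPencilDet A ∅) (fun _ => b)
      ≤ (b - 1 + δ) / (b * (b - 1)) * realPencilDet A ∅ fun _ => b := by
  have hu := (posDef_diagonal_sub hA1 (x := fun _ => b) fun _ => hb).isUnit
  rw [partialOp_smul_realPencilDet (Finset.notMem_empty i), insert_empty_eq, realPencilDet,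
    pencilDet_singleton A _ i hu, pencilDet_ofReal hA.isHermitian, Complex.re_mul_ofReal]
  exact mul_le_mul_of_nonneg_right (re_resolvent_diag_le hA hA1 hb hi)
    (realPencilDet_pos hA1 fun _ => hb).le

end Resolvent

section Colouring

open scoped Kronecker

variable {ι : Type*} [DecidableEq ι]

theorem omitOp_eq_prod (i : ι) (k : Fin 3) :
    omitOp ℝ i k = ∏ l, if l ≠ k then partialOp ℝ (i, l) else 1 := by
  rw [Fin.prod_univ_three, omitOp]
  fin_cases k <;> simp [mul_comm]

theorem posSemidef_one_sub_kronecker_one [Finite ι] {A : Matrix ι ι ℂ} {κ : Type*} [Finite κ]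
    [DecidableEq κ] (hA1 : (1 - A).PosSemidef) :
    (1 - A ⊗ₖ (1 : Matrix κ κ ℂ)).PosSemidef := by
  have h : 1 - A ⊗ₖ (1 : Matrix κ κ ℂ) = (1 - A) ⊗ₖ 1 := by
    rw [← one_kronecker_one]
    ext p q
    simp only [Matrix.sub_apply, kroneckerMap_apply, sub_mul]
  rw [h]
  exact hA1.kronecker .one

variable [Fintype ι]

theorem prod_esymm₃_eq_prod_partialOp :
    ∏ i : ι, esymm₃ ℝ i = ∏ p : ι × Fin 3, partialOp ℝ p := by
  simp only [Fintype.prod_prod_type, Fin.prod_univ_three, esymm₃]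

theorem prod_omitOp_eq_prod_partialOp (c : ι → Fin 3) :
    ∏ i, omitOp ℝ i (c i) = ∏ p : ι × Fin 3 with p.2 ≠ c p.1, partialOp ℝ p := by
  simp only [Finset.prod_filter, Fintype.prod_prod_type, omitOp_eq_prod]

theorem sum_blockDir : ∑ i : ι, (blockDir i : ι × Fin 3 → ℝ) = 1 := by
  ext p
  simp only [Finset.sum_apply, blockDir, Finset.sum_ite_eq, Finset.mem_univ, if_true, Pi.one_apply]

variable {A : Matrix ι ι ℂ}

theorem hasBarrier_realPencilDet (hA : A.PosSemidef) (hA1 : (1 - A).PosSemidef) {b δ : ℝ}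
    (hb : 1 < b) (hdiag : ∀ i, (A i i).re ≤ δ) :
    HasBarrier (realPencilDet (A ⊗ₖ (1 : Matrix (Fin 3) (Fin 3) ℂ)) ∅) (fun _ => b)
      ((b - 1 + δ) / (b * (b - 1))) where
  pos y hy := realPencilDet_pos (posSemidef_one_sub_kronecker_one hA1) fun p => hb.trans_le (hy p)
  le p := partialOp_smul_realPencilDet_le (hA.kronecker .one) (posSemidef_one_sub_kronecker_one hA1)
    hb <| by rw [kronecker_apply, one_apply_eq, mul_one]; exact hdiag p.1

theorem exists_forall_pencilDet_ne_zero (hA : A.PosSemidef) (hA1 : (1 - A).PosSemidef) {b δ : ℝ}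
    (hb : 1 < b) (hδ : 0 ≤ δ) (hdiag : ∀ i, (A i i).re ≤ δ) :
    ∃ c : ι → Fin 3, ∀ μ : ℝ, b - 4 / (9 * ((b - 1 + δ) / (b * (b - 1)))) ≤ μ →
      pencilDet (A ⊗ₖ (1 : Matrix (Fin 3) (Fin 3) ℂ)) {p | p.2 ≠ c p.1} (fun _ => (μ : ℂ)) ≠ 0 := by
  have hφ : 0 < (b - 1 + δ) / (b * (b - 1)) :=
    div_pos (by linarith) (mul_pos (by linarith) (by linarith))
  have hstable := isRealStable_realPencilDet (hA.kronecker (.one : PosSemidef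
    (1 : Matrix (Fin 3) (Fin 3) ℂ))).isHermitian
  have hne : (∏ i : ι, esymm₃ ℝ i) • realPencilDet (A ⊗ₖ (1 : Matrix (Fin 3) (Fin 3) ℂ)) ∅ ≠ 0 := by
    rw [prod_esymm₃_eq_prod_partialOp, prod_partialOp_smul_realPencilDet]
    exact fun h => one_ne_zero <| by
      simpa only [realPencilDet, pencilDet_univ, Complex.one_re, Pi.zero_apply] using congrFun h 0
  have hbar := (hasBarrier_realPencilDet hA hA1 hb hdiag).prod_esymm₂_smul hstable hφ hne
  obtain ⟨c, hc⟩ := hstable.exists_prod_omitOp_smul_pos hne hbar.pos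
  refine ⟨c, fun μ hμ h => (hc (fun _ => μ) fun p => ?_).ne' ?_⟩
  · simpa only [sum_blockDir, Pi.sub_apply, Pi.smul_apply, Pi.one_apply, smul_eq_mul, mul_one]
      using hμ
  · rw [prod_omitOp_eq_prod_partialOp, prod_partialOp_smul_realPencilDet, realPencilDet, h,
      Complex.zero_re]

end Colouring

section Pinching

open scoped Kronecker

theorem posSemidef_smul_one_sub {ι : Type*} [Fintype ι] [DecidableEq ι] {B : Matrix ι ι ℂ}
    (hB : B.IsHermitian) {l : ℝ}
    (h : ∀ (μ : ℝ) (v : ι → ℂ), l ≤ μ → B *ᵥ v = (μ : ℂ) • v → v = 0) :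
    ((l : ℂ) • (1 : Matrix ι ι ℂ) - B).PosSemidef := by
  have hM : ((l : ℂ) • (1 : Matrix ι ι ℂ) - B).IsHermitian := by
    rw [smul_one_eq_diagonal]
    exact isHermitian_diagonal_ofReal_sub hB fun _ => l
  rw [hM.posSemidef_iff_eigenvalues_nonneg]
  intro j
  by_contra! hneg
  refine hM.eigenvectorBasis.orthonormal.ne_zero j <| PiLp.ext <| congrFun <|
    h (l - hM.eigenvalues j) _ (le_sub_self_iff _ |>.2 hneg.le) ?_
  have hev := hM.mulVec_eigenvectorBasis j
  rw [sub_mulVec, smul_mulVec, one_mulVec, sub_eq_iff_eq_add, ← sub_eq_iff_eq_add'] at hev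
  rw [← hev, Complex.ofReal_sub, sub_smul, Complex.coe_smul,
    Complex.coe_smul (hM.eigenvalues j)]

variable {ι κ : Type*} [DecidableEq κ]

/-- The block-diagonal part of `A` with respect to the partition of the index set into the fibres
of the colouring `c`. -/
def pinching (c : ι → κ) (A : Matrix ι ι ℂ) : Matrix ι ι ℂ :=
  of fun i j => if c i = c j then A i j else 0

theorem isHermitian_pinching (c : ι → κ) {A : Matrix ι ι ℂ} (hA : A.IsHermitian) :
    (pinching c A).IsHermitian := by
  ext i j
  simp only [conjTranspose_apply, pinching, of_apply, apply_ite star, hA.apply, star_zero,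
    eq_comm (a := c i)]

theorem pinching_const (k : κ) (A : Matrix ι ι ℂ) : pinching (fun _ => k) A = A := by
  ext i j
  rw [pinching, of_apply, if_pos rfl]

variable [Fintype ι] [DecidableEq ι] [Fintype κ]

theorem sum_diagonal_mul_mul_diagonal_eq_pinching (c : ι → κ) (A : Matrix ι ι ℂ) :
    ∑ k, diagonal (fun i => if c i = k then (1 : ℂ) else 0) * A
      * diagonal (fun i => if c i = k then (1 : ℂ) else 0) = pinching c A := by
  ext i j
  simp only [Matrix.sum_apply, diagonal_mul, mul_diagonal, ite_mul, mul_ite, one_mul, zero_mul,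
    mul_one, mul_zero, pinching, of_apply, Finset.sum_ite_eq, Finset.mem_univ, if_true]

theorem eq_zero_of_pinching_mulVec_eq_smul {c : ι → κ} {A : Matrix ι ι ℂ} {μ : ℂ}
    (h : pencilDet (A ⊗ₖ (1 : Matrix κ κ ℂ)) {p | p.2 ≠ c p.1} (fun _ => μ) ≠ 0) {v : ι → ℂ}
    (hv : pinching c A *ᵥ v = μ • v) : v = 0 := by
  let w : ι × κ → ℂ := fun p => if p.2 = c p.1 then v p.1 else 0
  have hw : rowPencil (A ⊗ₖ (1 : Matrix κ κ ℂ)) {p | p.2 ≠ c p.1} (fun _ => μ) *ᵥ w = 0 := by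
    ext ⟨i, k⟩
    rw [rowPencil_mulVec, Pi.zero_apply]
    split_ifs with hk <;> rw [Finset.mem_filter_univ] at hk
    · exact if_neg hk
    obtain rfl : k = c i := not_not.1 hk
    have hrow : ((A ⊗ₖ (1 : Matrix κ κ ℂ)) *ᵥ w) (i, c i) = (pinching c A *ᵥ v) i := by
      simp only [mulVec, dotProduct, Fintype.sum_prod_type, kroneckerMap_apply, one_apply, w,
        mul_ite, ite_mul, mul_one, mul_zero, zero_mul, Finset.sum_ite_eq', Finset.mem_univ,
        if_true, pinching, of_apply]
    rw [hrow, hv, Pi.smul_apply, smul_eq_mul]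
    simp only [w, if_true, sub_self]
  have hw₀ : w = 0 := eq_zero_of_mulVec_eq_zero h hw
  funext i
  simpa only [w, if_true, Pi.zero_apply] using congrFun hw₀ (i, c i)

end Pinching

section Optimisation

theorem sqrt_add_two_mul_sqrt_sq {δ : ℝ} (h₀ : 0 ≤ δ) (h₁ : δ ≤ 1) :
    (√(5 * (1 - δ)) + 2 * √δ) ^ 2 = 5 - δ + 4 * (√(5 * (1 - δ)) * √δ) := by
  have hp : √(5 * (1 - δ)) ^ 2 = 5 * (1 - δ) := Real.sq_sqrt (by linarith)
  linear_combination hp + 4 * Real.sq_sqrt h₀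

theorem exists_sub_barrier_shift_eq {δ : ℝ} (h₀ : 0 < δ) (h₁ : δ < 4 / 9) :
    ∃ b : ℝ, 1 < b ∧ b - 4 / (9 * ((b - 1 + δ) / (b * (b - 1))))
      = 1 / 9 * (√(5 * (1 - δ)) + 2 * √δ) ^ 2 := by
  set u := 2 / 5 * (√(5 * (1 - δ)) * √δ) with hu
  have hu_sq : u ^ 2 = 4 / 5 * (δ * (1 - δ)) := by
    rw [hu, mul_pow, mul_pow, Real.sq_sqrt (by linarith), Real.sq_sqrt h₀.le]
    ring
  have hδu : δ < u := lt_of_pow_lt_pow_left₀ 2 (by positivity) (by nlinarith)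
  have hu₀ : u ≠ 0 := (h₀.trans hδu).ne'
  refine ⟨1 + (u - δ), by linarith, ?_⟩
  have hb : 1 + (u - δ) ≠ 0 := by linarith
  have hb₁ : 1 + (u - δ) - 1 ≠ 0 := by linarith
  rw [sqrt_add_two_mul_sqrt_sq h₀.le (by linarith), show 1 + (u - δ) - 1 + δ = u by ring]
  field_simp
  linear_combination (-5) * hu_sq

end Optimisation

section Paving

variable {ι : Type*} [Finite ι] {A : Matrix ι ι ℂ}

theorem eq_zero_of_posSemidef_of_re_diag_nonpos (hA : A.PosSemidef) (h : ∀ i, (A i i).re ≤ 0) :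
    A = 0 := by
  cases nonempty_fintype ι
  refine hA.trace_eq_zero_iff.1 (Finset.sum_eq_zero fun i _ => ?_)
  have hi := Complex.nonneg_iff.1 (hA.diag_nonneg (i := i))
  exact Complex.ext (le_antisymm (h i) hi.1) hi.2.symm

theorem exists_posSemidef_sub_pinching [DecidableEq ι] {δ : ℝ} (hδ0 : 0 ≤ δ) (hδ1 : δ ≤ 4 / 9)
    (hA : A.PosSemidef) (hA1 : (1 - A).PosSemidef) (hdiag : ∀ i, (A i i).re ≤ δ) :
    ∃ c : ι → Fin 3, (((1 / 9 * (√(5 * (1 - δ)) + 2 * √δ) ^ 2 : ℝ) : ℂ) • (1 : Matrix ι ι ℂ)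
      - pinching c A).PosSemidef := by
  cases nonempty_fintype ι
  rcases hδ0.eq_or_lt with rfl | hδ_pos
  · refine ⟨fun _ => 0, ?_⟩
    rw [pinching_const, eq_zero_of_posSemidef_of_re_diag_nonpos hA hdiag, sub_zero]
    exact PosSemidef.one.smul (Complex.zero_le_real.2 (by positivity))
  rcases hδ1.eq_or_lt with rfl | hδ_lt
  · refine ⟨fun _ => 0, ?_⟩
    have hbound : 1 / 9 * (√(5 * (1 - 4 / 9)) + 2 * √(4 / 9)) ^ 2 = 1 := by
      rw [show (5 * (1 - 4 / 9) : ℝ) = (5 / 3) ^ 2 by norm_num,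
        show (4 / 9 : ℝ) = (2 / 3) ^ 2 by norm_num, Real.sqrt_sq (by norm_num),
        Real.sqrt_sq (by norm_num)]
      norm_num
    rwa [pinching_const, hbound, Complex.ofReal_one, one_smul]
  obtain ⟨b, hb, hbound⟩ := exists_sub_barrier_shift_eq hδ_pos hδ_lt
  obtain ⟨c, hc⟩ := exists_forall_pencilDet_ne_zero hA hA1 hb hδ0 hdiag
  rw [hbound] at hc
  exact ⟨c, posSemidef_smul_one_sub (isHermitian_pinching c hA.isHermitian) fun μ v hμ hv =>
    eq_zero_of_pinching_mulVec_eq_smul (hc μ hμ) hv⟩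

end Paving

end Paving

theorem three_paving_estimate_general {ι : Type*} [Fintype ι] [DecidableEq ι] {δ : ℝ}
    (hδ0 : 0 ≤ δ) (hδ1 : δ ≤ 4 / 9) {A : Matrix ι ι ℂ} (hA : A.PosSemidef)
    (hA1 : (1 - A).PosSemidef) (hdiag : ∀ i, (A i i).re ≤ δ) :
    ∃ X₁ X₂ X₃ : Finset ι,
      Disjoint X₁ X₂ ∧ Disjoint X₁ X₃ ∧ Disjoint X₂ X₃ ∧
      X₁ ∪ X₂ ∪ X₃ = Finset.univ ∧
      (((1 / 9 * (√(5 * (1 - δ)) + 2 * √δ) ^ 2 : ℝ) : ℂ) • (1 : Matrix ι ι ℂ)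
        - (diagonal (fun i => if i ∈ X₁ then 1 else 0) * A
              * diagonal (fun i => if i ∈ X₁ then 1 else 0)
            + diagonal (fun i => if i ∈ X₂ then 1 else 0) * A
              * diagonal (fun i => if i ∈ X₂ then 1 else 0)
            + diagonal (fun i => if i ∈ X₃ then 1 else 0) * A
              * diagonal (fun i => if i ∈ X₃ then 1 else 0))).PosSemidef := by
  obtain ⟨c, hc⟩ := Paving.exists_posSemidef_sub_pinching hδ0 hδ1 hA hA1 hdiag
  let X (k : Fin 3) : Finset ι := {i | c i = k}
  have hX {k l : Fin 3} (hkl : k ≠ l) : Disjoint (X k) (X l) :=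
    Finset.disjoint_filter.2 fun i _ hk hl => hkl (hk.symm.trans hl)
  refine ⟨X 0, X 1, X 2, hX (by decide), hX (by decide), hX (by decide), ?_, ?_⟩
  · ext i
    simp only [X, Finset.mem_union, Finset.mem_filter_univ, Finset.mem_univ, iff_true]
    exact (by decide : ∀ k : Fin 3, (k = 0 ∨ k = 1) ∨ k = 2) (c i)
  · rw [← Paving.sum_diagonal_mul_mul_diagonal_eq_pinching, Fin.sum_univ_three] at hc
    simpa only [X, Finset.mem_filter_univ] using hc

/-- Any positive contraction with diagonal entries at most `δ ≤ 4/9` admits a three-paving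
whose largest eigenvalue is at most `(1/9)(√(5(1-δ)) + 2√δ)²`. -/
theorem three_paving_estimate {n : ℕ} (δ : ℝ) (hδ0 : 0 ≤ δ) (hδ1 : δ ≤ 4/9)
    (A : Matrix (Fin n) (Fin n) ℂ)
    (hA : A.PosSemidef) (hA1 : ((1 : Matrix (Fin n) (Fin n) ℂ) - A).PosSemidef)
    (hdiag : ∀ i, (A i i).re ≤ δ) :
    ∃ X₁ X₂ X₃ : Finset (Fin n),
      Disjoint X₁ X₂ ∧ Disjoint X₁ X₃ ∧ Disjoint X₂ X₃ ∧
      X₁ ∪ X₂ ∪ X₃ = Finset.univ ∧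
      ((((1/9 * (Real.sqrt (5*(1-δ)) + 2 * Real.sqrt δ)^2 : ℝ) : ℂ) •
            (1 : Matrix (Fin n) (Fin n) ℂ)
          - (proj X₁ * A * proj X₁ + proj X₂ * A * proj X₂ + proj X₃ * A * proj X₃)).PosSemidef) :=
  three_paving_estimate_general hδ0 hδ1 hA hA1 hdiag
end
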